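/- arXiv:1510.05904 — 10 statements merged into one kernel-verified Lean document; each statement's English description precedes it below -/
import Mathlib

section
/- Let m be a positive integer, let G be an m-boundedly generated group, and let L ≤ G be a subgroup of finite index. Then there exists a subgroup U ≤ L of finite index in G that can be generated by m elements. -/
/-- A group `G` is `m`-boundedly generated (witnessed by `g : Fin m → G`) if every
element of `G` is a product `g 0 ^ k 0 * g 1 ^ k 1 * ⋯ * g (m-1) ^ k (m-1)`
for some integers `k i`, i.e. `G = ⟨g 0⟩⟨g 1⟩⋯⟨g (m-1)⟩` as a set. -/
def IsBoundedlyGeneratedBy {G : Type*} [Group G] (m : ℕ) (g : Fin m → G) : Prop :=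
  ∀ x : G, ∃ k : Fin m → ℤ, x = (List.ofFn fun i => g i ^ k i).prod

/-!
Let `n` be the index of the normal core of `L`, so that all `n`-th powers lie in it. Division with
remainder `k i = r i + n * q i` splits each factor `g i ^ k i` as `g i ^ r i * (g i ^ n) ^ q i`.
Moving the factors `g i ^ r i` to the front conjugates each `g i ^ n` by the product of the
`g j ^ r j` with `j > i`. Hence `G` is a union of left cosets, one for each of the finitely many
residue vectors `r`, of subgroups generated by `m` conjugates of `n`-th powers. These subgroups
lie in `L`, and by B. H. Neumann's lemma one of them has finite index.
-/

open scoped Pointwise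

section TailProd

variable {M G : Type*} [Monoid M] [Group G] {m : ℕ}

/-- The ordered product `a (i + 1) * ⋯ * a (m - 1)` of the entries of `a` strictly after `i`.
Moving all the factors `a j` of a product of the `a i * b i` to the front conjugates `b i` by it. -/
def tailProd (a : Fin m → M) (i : Fin m) : M :=
  ((List.ofFn a).drop (i + 1)).prod

theorem tailProd_zero (a : Fin (m + 1) → M) :
    tailProd a 0 = (List.ofFn fun i => a i.succ).prod := by
  simp [tailProd]

theorem tailProd_succ (a : Fin (m + 1) → M) (i : Fin m) :
    tailProd a i.succ = tailProd (fun j => a j.succ) i := by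
  simp [tailProd]

theorem prod_ofFn_mul_eq_mul_prod_ofFn_conj (a b : Fin m → G) :
    (List.ofFn fun i => a i * b i).prod =
      (List.ofFn a).prod * (List.ofFn fun i => (tailProd a i)⁻¹ * b i * tailProd a i).prod := by
  induction m with
  | zero => simp
  | succ m ih =>
    simp only [List.ofFn_succ, List.prod_cons, tailProd_zero, tailProd_succ,
      ih (fun i => a i.succ) fun i => b i.succ]
    group

end TailProd

namespace IsBoundedlyGeneratedBy

variable {G : Type*} [Group G] {m : ℕ} {g : Fin m → G}

theorem iUnion_leftCoset_closure_conj_zpow_eq_univ (hg : IsBoundedlyGeneratedBy m g)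
    {n : Fin m → ℤ} (hn : ∀ i, n i ≠ 0) :
    ⋃ r ∈ Fintype.piFinset fun i => Finset.Ico 0 |n i|,
      (List.ofFn fun i => g i ^ r i).prod •
        (Subgroup.closure (Set.range fun i =>
          (tailProd (fun j => g j ^ r j) i)⁻¹ * g i ^ n i * tailProd (fun j => g j ^ r j) i) :
            Set G) = Set.univ := by
  refine Set.eq_univ_of_forall fun x => ?_
  obtain ⟨k, rfl⟩ := hg x
  let r : Fin m → ℤ := fun i => k i % n i
  have hr : r ∈ Fintype.piFinset fun i => Finset.Ico 0 |n i| :=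
    Fintype.mem_piFinset.2 fun i =>
      Finset.mem_Ico.2 ⟨Int.emod_nonneg _ (hn i), Int.emod_lt_abs _ (hn i)⟩
  have hdiv (i : Fin m) : g i ^ k i = g i ^ r i * (g i ^ n i) ^ (k i / n i) := by
    rw [← zpow_mul, ← zpow_add, Int.emod_add_mul_ediv]
  refine Set.mem_iUnion₂.2 ⟨r, hr, ?_⟩
  simp only [hdiv]
  rw [prod_ofFn_mul_eq_mul_prod_ofFn_conj]
  refine Set.smul_mem_smul_set (list_prod_mem (List.forall_mem_ofFn_iff.2 fun i => ?_))
  let t := tailProd (fun j => g j ^ r j) i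
  have hpow : t⁻¹ * (g i ^ n i) ^ (k i / n i) * t = (t⁻¹ * g i ^ n i * t) ^ (k i / n i) := by
    simpa using (conj_zpow (i := k i / n i) (a := t⁻¹) (b := g i ^ n i)).symm
  rw [hpow]
  exact zpow_mem (Subgroup.subset_closure (Set.mem_range_self i)) _

theorem exists_isConj_zpow_finiteIndex_closure (hg : IsBoundedlyGeneratedBy m g)
    {n : Fin m → ℤ} (hn : ∀ i, n i ≠ 0) :
    ∃ h : Fin m → G, (∀ i, IsConj (g i ^ n i) (h i)) ∧
      (Subgroup.closure (Set.range h)).FiniteIndex := by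
  obtain ⟨r, -, hr⟩ := Subgroup.exists_finiteIndex_of_leftCoset_cover
    (hg.iUnion_leftCoset_closure_conj_zpow_eq_univ hn)
  exact ⟨_, fun i => isConj_iff.2 ⟨(tailProd (fun j => g j ^ r j) i)⁻¹, by rw [inv_inv]⟩, hr⟩

end IsBoundedlyGeneratedBy

/-- Let `m` be a positive integer, let `G` be an `m`-boundedly generated group, and let
`L ≤ G` be a subgroup of finite index.  Then there exists a subgroup `U ≤ L` of finite
index in `G` that can be generated by `m` elements. -/
theorem bounded_generation_finite_index_subgroup_with_small_rank
    {G : Type*} [Group G] (m : ℕ) (hm : 0 < m)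
    (hbg : ∃ g : Fin m → G, IsBoundedlyGeneratedBy m g)
    (L : Subgroup G) (hL : L.index ≠ 0) :
    ∃ U : Subgroup G, U ≤ L ∧ U.index ≠ 0 ∧
      ∃ S : Finset G, S.card ≤ m ∧ Subgroup.closure (S : Set G) = U := by
  classical
  obtain ⟨g, hg⟩ := hbg
  have : L.FiniteIndex := ⟨hL⟩
  let N : Subgroup G := L.normalCore
  have hN : (N.index : ℤ) ≠ 0 := Nat.cast_ne_zero.2 Subgroup.FiniteIndex.index_ne_zero
  obtain ⟨h, hconj, hindex⟩ := hg.exists_isConj_zpow_finiteIndex_closure fun _ => hN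
  have hpow (i : Fin m) : g i ^ (N.index : ℤ) ∈ N := by
    rw [zpow_natCast]
    exact N.pow_index_mem (g i)
  have hmem (i : Fin m) : h i ∈ L :=
    L.normalCore_le (Group.conjugates_subset_normal (hpow i) (hconj i))
  refine ⟨Subgroup.closure (Set.range h), ?_, hindex.index_ne_zero, Finset.univ.image h, ?_, ?_⟩
  · exact (Subgroup.closure_le L).2 (Set.range_subset_iff.2 hmem)
  · exact Finset.card_image_le.trans_eq (Finset.card_fin m)
  · rw [Fintype.coe_image_univ]
end

section
/- Let m be a positive integer, let G be an m-boundedly generated group, and let L ≤ G be a subgroup of finite index n. Then rank(L) ≤ 2·m²·√(n·log(n)) + m, where log denotes the natural logarithm. -/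
/-! Let `o i` be the order of `g i` acting on `G ⧸ L`. Write each exponent as
`k i = r i + o i * q i` with `0 ≤ r i < o i` and move the powers `g i ^ r i` to the front of the
product of the `g i ^ k i`. What remains is a product of powers of conjugates of the `g i ^ o i`,
by elements depending only on `r`, so `G` is covered by `∏ i, o i` cosets of subgroups each
generated by `m` conjugates of the `g i ^ o i`. By B. H. Neumann's lemma one of these subgroups has
index at most `∏ i, o i`, and it lies in `L` because the `g i ^ o i` lie in the normal core of `L`.
Each further generator at least halves the index, so `m + log₂ (∏ i, o i)` generators suffice.

Landau's argument makes each `log₂ (o i)` at most `4 √(n log n)`: cycles of length at most `t`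
contribute at most `lcm (1, …, t) ≤ 4 ^ t` to the order of a permutation of `n` points, at most
`n / t` cycles are longer, and `t = √(n log n)` balances the two contributions. For `m ≥ 2` this is
enough since `4 m ≤ 2 m ^ 2`; for `m = 1` the group is cyclic. -/

open scoped Pointwise

section Landau

theorem lcmUpto_add_dvd {n k : ℕ} (hkn : k ≤ n) :
    Nat.lcmUpto (n + k) ∣ Nat.lcmUpto n * (n + k).choose k := by
  have hchoose : (n + k).choose k ≠ 0 := (Nat.choose_pos (Nat.le_add_left k n)).ne'
  rw [← Nat.factorization_prime_le_iff_dvd (Nat.lcmUpto_ne_zero _)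
    (mul_ne_zero (Nat.lcmUpto_ne_zero _) hchoose)]
  intro p hp
  rw [Nat.factorization_mul (Nat.lcmUpto_ne_zero _) hchoose, Finsupp.add_apply,
    Nat.factorization_lcmUpto _ hp, Nat.factorization_lcmUpto _ hp,
    Nat.factorization_choose' hp (Nat.lt_succ_self _)]
  -- Adding `n` and `k` in base `p` produces a carry at every `i` with `n < p ^ i ≤ n + k`.
  have hcarry : Finset.Ioc (p.log n) (p.log (n + k)) ⊆
      {i ∈ Finset.Ico 1 (p.log (n + k)).succ | p ^ i ≤ k % p ^ i + n % p ^ i} := by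
    intro i hi
    obtain ⟨hlo, hhi⟩ := Finset.mem_Ioc.1 hi
    have hn : n < p ^ i := Nat.lt_pow_of_log_lt hp.one_lt hlo
    have hlog_pos : 0 < p.log (n + k) := (Nat.zero_le _).trans_lt (hlo.trans_le hhi)
    have hnk : p ^ i ≤ n + k :=
      Nat.pow_le_of_le_log (fun h => by simp [h] at hlog_pos) hhi
    rw [Finset.mem_filter, Finset.mem_Ico, Nat.mod_eq_of_lt hn, Nat.mod_eq_of_lt (hkn.trans_lt hn)]
    lia
  have hcard := Finset.card_le_card hcarry
  rw [Nat.card_Ioc] at hcard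
  lia

theorem choose_half_le_four_pow (n : ℕ) : n.choose (n / 2) ≤ 4 ^ (n / 2) := by
  obtain ⟨k, rfl | rfl⟩ := n.even_or_odd'
  · simpa [Nat.centralBinom] using Nat.centralBinom_le_four_pow k
  · simpa [Nat.mul_add_div] using Nat.choose_middle_le_pow k

theorem lcmUpto_le_four_pow (n : ℕ) : Nat.lcmUpto n ≤ 4 ^ n := by
  induction n using Nat.strong_induction_on with
  | _ n ih =>
  obtain hn | hn := Nat.lt_or_ge n 2
  · interval_cases n <;> simp [Nat.lcmUpto]
  have hsplit : n - n / 2 + n / 2 = n := Nat.sub_add_cancel (Nat.div_le_self n 2)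
  have hdvd := lcmUpto_add_dvd (n := n - n / 2) (k := n / 2) (by lia)
  rw [hsplit] at hdvd
  calc Nat.lcmUpto n ≤ Nat.lcmUpto (n - n / 2) * n.choose (n / 2) :=
        Nat.le_of_dvd (Nat.mul_pos (Nat.lcmUpto_pos _) (Nat.choose_pos (Nat.div_le_self n 2))) hdvd
    _ ≤ 4 ^ (n - n / 2) * 4 ^ (n / 2) :=
        Nat.mul_le_mul (ih _ (by lia)) (choose_half_le_four_pow n)
    _ = 4 ^ n := by rw [← pow_add, hsplit]

theorem multiset_prod_le_pow_div {s : Multiset ℕ} {n k : ℕ} (hk : 0 < k) (hs : ∀ a ∈ s, k ≤ a)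
    (hsum : s.sum ≤ n) : s.prod ≤ n ^ (n / k) := by
  obtain rfl | ⟨b, hb⟩ := s.empty_or_exists_mem
  · cases n <;> simp [Nat.one_le_pow]
  have hle : ∀ a ∈ s, a ≤ n := fun a ha => (Multiset.le_sum_of_mem ha).trans hsum
  have hcard : s.card ≤ n / k := by
    rw [Nat.le_div_iff_mul_le hk, ← smul_eq_mul]
    exact (Multiset.card_nsmul_le_sum hs).trans hsum
  calc s.prod ≤ n ^ s.card := Multiset.prod_le_pow_card s n hle
    _ ≤ n ^ (n / k) := Nat.pow_le_pow_right (hk.trans_le ((hs b hb).trans (hle b hb))) hcard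

theorem multiset_lcm_le_four_pow_mul_pow {s : Multiset ℕ} {n : ℕ} (hs : ∀ a ∈ s, 0 < a)
    (hsum : s.sum ≤ n) (k : ℕ) : s.lcm ≤ 4 ^ k * n ^ (n / (k + 1)) := by
  set large := s.filter (k < ·)
  have hdvd : s.lcm ∣ Nat.lcmUpto k * large.prod := by
    refine Multiset.lcm_dvd.2 fun a ha => ?_
    obtain hak | hak := le_or_gt a k
    · exact (Finset.dvd_lcm (f := id) (Finset.mem_Icc.2 ⟨hs a ha, hak⟩)).mul_right _
    · exact (Multiset.dvd_prod (Multiset.mem_filter.2 ⟨ha, hak⟩)).mul_left _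
  have hprod_pos : 0 < large.prod :=
    Multiset.prod_pos fun a ha => hs a (Multiset.mem_of_mem_filter ha)
  have hlarge_sum : large.sum ≤ n := by
    rw [← Multiset.filter_add_not (k < ·) s, Multiset.sum_add] at hsum
    exact (Nat.le_add_right _ _).trans hsum
  calc s.lcm ≤ Nat.lcmUpto k * large.prod :=
        Nat.le_of_dvd (Nat.mul_pos (Nat.lcmUpto_pos k) hprod_pos) hdvd
    _ ≤ 4 ^ k * n ^ (n / (k + 1)) := Nat.mul_le_mul (lcmUpto_le_four_pow k)
        (multiset_prod_le_pow_div k.succ_pos (fun a ha => (Multiset.mem_filter.1 ha).2) hlarge_sum)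

variable {α : Type*} [Finite α] (σ : Equiv.Perm α)

theorem orderOf_perm_le_four_pow_mul_pow (k : ℕ) :
    orderOf σ ≤ 4 ^ k * Nat.card α ^ (Nat.card α / (k + 1)) := by
  classical
  have := Fintype.ofFinite α
  rw [← σ.lcm_cycleType, Nat.card_eq_fintype_card]
  exact multiset_lcm_le_four_pow_mul_pow
    (fun _ ha => zero_lt_two.trans_le (Equiv.Perm.two_le_of_mem_cycleType ha)) σ.sum_cycleType_le k

theorem log_orderOf_perm_le_add_div [Nonempty α] {t : ℝ} (ht : 0 < t) :
    Real.log (orderOf σ) ≤ t * Real.log 4 + Nat.card α * Real.log (Nat.card α) / t := by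
  set n := Nat.card α
  set k := ⌊t⌋₊
  have hn : 0 < n := Nat.card_pos
  have hk : (k : ℝ) ≤ t := Nat.floor_le ht.le
  have hdiv : ((n / (k + 1) : ℕ) : ℝ) ≤ n / t :=
    calc ((n / (k + 1) : ℕ) : ℝ) ≤ n / (k + 1 : ℕ) := Nat.cast_div_le
      _ ≤ n / t := by
        gcongr
        exact_mod_cast (Nat.lt_floor_add_one t).le
  calc Real.log (orderOf σ) ≤ Real.log ((4 ^ k * n ^ (n / (k + 1)) : ℕ) : ℝ) := by
        gcongr
        · exact_mod_cast orderOf_pos σ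
        · exact orderOf_perm_le_four_pow_mul_pow σ k
    _ = k * Real.log 4 + (n / (k + 1) : ℕ) * Real.log n := by
        push_cast
        rw [Real.log_mul (by positivity) (by positivity), Real.log_pow, Real.log_pow]
    _ ≤ t * Real.log 4 + n / t * Real.log n := by gcongr
    _ = t * Real.log 4 + n * Real.log n / t := by rw [div_mul_eq_mul_div]

theorem log_orderOf_perm_le :
    Real.log (orderOf σ) ≤ (1 + Real.log 4) * √(Nat.card α * Real.log (Nat.card α)) := by
  cases subsingleton_or_nontrivial α with
  | inl _ =>
    rw [Subsingleton.elim σ 1, orderOf_one, Nat.cast_one, Real.log_one]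
    positivity
  | inr _ =>
    have hlog : 0 < Real.log (Nat.card α) := Real.log_pos (mod_cast Finite.one_lt_card)
    have ht : 0 < √(Nat.card α * Real.log (Nat.card α)) :=
      Real.sqrt_pos.2 (mul_pos (mod_cast Nat.card_pos) hlog)
    refine (log_orderOf_perm_le_add_div σ ht).trans_eq ?_
    rw [Real.div_sqrt]
    ring

theorem logb_two_orderOf_perm_le :
    Real.logb 2 (orderOf σ) ≤ 4 * √(Nat.card α * Real.log (Nat.card α)) := by
  have hlog4 : Real.log 4 = 2 * Real.log 2 := by
    rw [show (4 : ℝ) = 2 ^ 2 by norm_num, Real.log_pow, Nat.cast_ofNat]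
  have hconst : 1 + Real.log 4 ≤ 4 * Real.log 2 := by linarith [Real.log_two_gt_d9]
  rw [Real.logb, div_le_iff₀ (Real.log_pos one_lt_two), mul_right_comm]
  exact (log_orderOf_perm_le σ).trans (by gcongr)

end Landau

section Subgroups

variable {G : Type*} [Group G]

theorem exists_prod_ofFn_mul_eq_mul_prod_conj {m : ℕ} (x : Fin m → G) :
    ∃ c : Fin m → G, ∀ y : Fin m → G, (List.ofFn fun i => x i * y i).prod =
      (List.ofFn x).prod * (List.ofFn fun i => MulAut.conj (c i) (y i)).prod := by
  induction m with
  | zero => simp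
  | succ m ih =>
    obtain ⟨c, hc⟩ := ih fun i => x i.succ
    refine ⟨Fin.cons (List.ofFn fun i : Fin m => x i.succ).prod⁻¹ c, fun y => ?_⟩
    simp only [List.ofFn_succ, List.prod_cons, Fin.cons_zero, Fin.cons_succ, hc fun i => y i.succ,
      MulAut.conj_apply]
    group

theorem two_mul_relIndex_sup_zpowers_le {H L : Subgroup G} (hHL : H ≤ L)
    (hindex : H.relIndex L ≠ 0) {x : G} (hxL : x ∈ L) (hxH : x ∉ H) :
    2 * (H ⊔ Subgroup.zpowers x).relIndex L ≤ H.relIndex L := by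
  set K := H ⊔ Subgroup.zpowers x
  have hmul : H.relIndex K * K.relIndex L = H.relIndex L :=
    Subgroup.relIndex_mul_relIndex H K L le_sup_left (sup_le hHL (Subgroup.zpowers_le.2 hxL))
  have hne_one : H.relIndex K ≠ 1 := fun h =>
    hxH (Subgroup.relIndex_eq_one.1 h (Subgroup.mem_sup_right (Subgroup.mem_zpowers x)))
  have hne_zero : H.relIndex K ≠ 0 := fun h => hindex (by rw [← hmul, h, zero_mul])
  rw [← hmul]
  exact Nat.mul_le_mul_right _ (by lia)

theorem exists_finset_sup_closure_eq {H L : Subgroup G} (hHL : H ≤ L) (hindex : H.relIndex L ≠ 0) :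
    ∃ T : Finset G, H ⊔ Subgroup.closure (T : Set G) = L ∧ 2 ^ T.card ≤ H.relIndex L := by
  classical
  induction hr : H.relIndex L using Nat.strong_induction_on generalizing H with
  | _ r ih =>
  subst hr
  by_cases hLH : L ≤ H
  · exact ⟨∅, by simpa using le_antisymm hHL hLH, by simpa using Nat.one_le_iff_ne_zero.2 hindex⟩
  obtain ⟨x, hxL, hxH⟩ := SetLike.not_le_iff_exists.1 hLH
  have hKL : H ⊔ Subgroup.zpowers x ≤ L := sup_le hHL (Subgroup.zpowers_le.2 hxL)
  have hhalf := two_mul_relIndex_sup_zpowers_le hHL hindex hxL hxH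
  have hK : (H ⊔ Subgroup.zpowers x).relIndex L ≠ 0 := fun h =>
    hindex (Subgroup.relIndex_eq_zero_of_le_left le_sup_left h)
  obtain ⟨T, hT, hcard⟩ := ih _ (by lia) hKL hK rfl
  refine ⟨insert x T, ?_, ?_⟩
  · rw [Finset.coe_insert, Set.insert_eq, Subgroup.closure_union, ← sup_assoc,
      ← Subgroup.zpowers_eq_closure, hT]
  · calc 2 ^ (insert x T).card ≤ 2 ^ (T.card + 1) :=
          Nat.pow_le_pow_right two_pos (Finset.card_insert_le x T)
      _ = 2 * 2 ^ T.card := pow_succ' 2 T.card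
      _ ≤ 2 * (H ⊔ Subgroup.zpowers x).relIndex L := Nat.mul_le_mul_left 2 hcard
      _ ≤ H.relIndex L := hhalf

end Subgroups

namespace IsBoundedlyGeneratedBy

variable {G : Type*} [Group G] {m : ℕ} {g : Fin m → G}

protected theorem isCyclic {g : Fin 1 → G} (hg : IsBoundedlyGeneratedBy 1 g) : IsCyclic G :=
  ⟨g 0, fun x => by
    obtain ⟨k, rfl⟩ := hg x
    exact ⟨k 0, by simp⟩⟩

theorem exists_closure_singleton_eq {g : Fin 1 → G} (hg : IsBoundedlyGeneratedBy 1 g)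
    (L : Subgroup G) : ∃ a : G, Subgroup.closure {a} = L := by
  have := hg.isCyclic
  obtain ⟨a, ha⟩ := (Subgroup.isCyclic_iff_exists_zpowers_eq_top L).1 inferInstance
  exact ⟨a, by rw [← Subgroup.zpowers_eq_closure, ha]⟩

theorem exists_isConj_pow_closure_index_le (hg : IsBoundedlyGeneratedBy m g) {o : Fin m → ℕ}
    (ho : ∀ i, 0 < o i) :
    ∃ h : Fin m → G, (∀ i, IsConj (g i ^ o i) (h i)) ∧
      (Subgroup.closure (Set.range h)).FiniteIndex ∧
      (Subgroup.closure (Set.range h)).index ≤ ∏ i, o i := by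
  choose c hc using fun r : Fin m → ℤ => exists_prod_ofFn_mul_eq_mul_prod_conj fun i => g i ^ r i
  let h (r : Fin m → ℤ) (i : Fin m) : G := MulAut.conj (c r i) (g i ^ o i)
  let K (r : Fin m → ℤ) : Subgroup G := Subgroup.closure (Set.range (h r))
  let box : Finset (Fin m → ℤ) := Fintype.piFinset fun i => Finset.Ico 0 (o i)
  have hcover : ⋃ r ∈ box, (List.ofFn fun i => g i ^ r i).prod • (K r : Set G) = Set.univ := by
    refine Set.eq_univ_of_forall fun x => ?_
    obtain ⟨k, rfl⟩ := hg x
    have hr : (fun i => k i % o i) ∈ box := Fintype.mem_piFinset.2 fun i =>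
      Finset.mem_Ico.2 ⟨Int.emod_nonneg _ (mod_cast (ho i).ne'),
        Int.emod_lt_of_pos _ (mod_cast ho i)⟩
    have hk : ∀ i, g i ^ k i = g i ^ (k i % o i) * (g i ^ o i) ^ (k i / o i) := fun i => by
      rw [← zpow_natCast, ← zpow_mul, ← zpow_add, Int.emod_add_mul_ediv]
    refine Set.mem_iUnion₂.2 ⟨_, hr, ?_⟩
    simp only [hk]
    rw [hc (fun i => k i % o i) fun i => (g i ^ o i) ^ (k i / o i)]
    refine Set.smul_mem_smul_set ((K _).list_prod_mem (List.forall_mem_ofFn_iff.2 fun i => ?_))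
    rw [map_zpow]
    exact (K _).zpow_mem (Subgroup.subset_closure (Set.mem_range_self i)) _
  obtain ⟨r, -, hfin, hle⟩ := Subgroup.exists_index_le_card_of_leftCoset_cover hcover
  have hbox : box.card = ∏ i, o i := by simp [box]
  exact ⟨h r, fun i => isConj_iff.2 ⟨c r i, rfl⟩, hfin, hle.trans_eq hbox⟩

theorem exists_finset_closure_eq_card_le_add_log (hg : IsBoundedlyGeneratedBy m g)
    (L : Subgroup G) {o : Fin m → ℕ} (ho : ∀ i, 0 < o i) (hL : ∀ i, g i ^ o i ∈ L.normalCore) :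
    ∃ S : Finset G, Subgroup.closure (S : Set G) = L ∧ S.card ≤ m + Nat.log 2 (∏ i, o i) := by
  classical
  obtain ⟨h, hconj, hfin, hindex⟩ := hg.exists_isConj_pow_closure_index_le ho
  have hHL : Subgroup.closure (Set.range h) ≤ L := by
    refine (Subgroup.closure_le L).2 (Set.range_subset_iff.2 fun i => ?_)
    obtain ⟨c, hc⟩ := isConj_iff.1 (hconj i)
    exact hc ▸ L.normalCore_le (L.normalCore_normal.conj_mem _ (hL i) c)
  have hdvd := Subgroup.relIndex_dvd_index_of_le hHL
  obtain ⟨T, hT, hTcard⟩ :=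
    exists_finset_sup_closure_eq hHL (ne_zero_of_dvd_ne_zero hfin.index_ne_zero hdvd)
  refine ⟨Finset.univ.image h ∪ T, ?_, ?_⟩
  · rw [Finset.coe_union, Subgroup.closure_union, Finset.coe_image, Finset.coe_univ,
      Set.image_univ, hT]
  · have hpow : 2 ^ T.card ≤ ∏ i, o i :=
      (hTcard.trans (Nat.le_of_dvd (Nat.pos_of_ne_zero hfin.index_ne_zero) hdvd)).trans hindex
    calc (Finset.univ.image h ∪ T).card ≤ (Finset.univ.image h).card + T.card :=
          Finset.card_union_le _ _
      _ ≤ m + Nat.log 2 (∏ i, o i) := by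
          gcongr
          · exact Finset.card_image_le.trans_eq (Finset.card_fin m)
          · exact Nat.le_log_of_pow_le one_lt_two hpow

theorem exists_finset_closure_eq_card_le (hg : IsBoundedlyGeneratedBy m g) (L : Subgroup G)
    [L.FiniteIndex] :
    ∃ S : Finset G, Subgroup.closure (S : Set G) = L ∧
      (S.card : ℝ) ≤ 4 * m * √(L.index * Real.log L.index) + m := by
  let o (i : Fin m) : ℕ := orderOf (MulAction.toPermHom G (G ⧸ L) (g i))
  have ho : ∀ i, 0 < o i := fun i => orderOf_pos _
  have hL : ∀ i, g i ^ o i ∈ L.normalCore := fun i => by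
    rw [Subgroup.normalCore_eq_ker, MonoidHom.mem_ker, map_pow, pow_orderOf_eq_one]
  obtain ⟨S, hS, hcard⟩ := hg.exists_finset_closure_eq_card_le_add_log L ho hL
  refine ⟨S, hS, ?_⟩
  have hlog : (Nat.log 2 (∏ i, o i) : ℝ) ≤ m * (4 * √(L.index * Real.log L.index)) :=
    calc (Nat.log 2 (∏ i, o i) : ℝ) ≤ Real.logb 2 (∏ i, (o i : ℝ)) :=
          mod_cast Real.natLog_le_logb (∏ i, o i) 2
      _ = ∑ i, Real.logb 2 (o i) := Real.logb_prod _ _ fun i _ => mod_cast (ho i).ne'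
      _ ≤ ∑ _i : Fin m, 4 * √(L.index * Real.log L.index) :=
          Finset.sum_le_sum fun i _ => logb_two_orderOf_perm_le _
      _ = m * (4 * √(L.index * Real.log L.index)) := by simp
  calc (S.card : ℝ) ≤ m + Nat.log 2 (∏ i, o i) := mod_cast hcard
    _ ≤ m + m * (4 * √(L.index * Real.log L.index)) := by gcongr
    _ = 4 * m * √(L.index * Real.log L.index) + m := by ring

end IsBoundedlyGeneratedBy

/-- Let `m` be a positive integer, let `G` be an `m`-boundedly generated group, and let
`L ≤ G` be a subgroup of finite index `n`.  Then `rank L ≤ 2 m² √(n log n) + m`: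
there is a generating set of `L` of cardinality at most `2 m² √(n log n) + m`. -/
theorem rank_le_of_bounded_generation
    {G : Type*} [Group G] (m : ℕ) (hm : 0 < m)
    (hbg : ∃ g : Fin m → G, IsBoundedlyGeneratedBy m g)
    (L : Subgroup G) (n : ℕ) (hn : L.index = n) (hn0 : 0 < n) :
    ∃ S : Finset G, Subgroup.closure (S : Set G) = L ∧
      (S.card : ℝ) ≤ 2 * m ^ 2 * Real.sqrt (n * Real.log n) + m := by
  obtain ⟨g, hg⟩ := hbg
  obtain rfl | hm2 : m = 1 ∨ 2 ≤ m := by lia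
  · obtain ⟨a, ha⟩ := hg.exists_closure_singleton_eq L
    exact ⟨{a}, by rwa [Finset.coe_singleton], by simpa using by positivity⟩
  · have : L.FiniteIndex := ⟨by lia⟩
    obtain ⟨S, hS, hcard⟩ := hg.exists_finset_closure_eq_card_le L
    rw [hn] at hcard
    have hcoeff : (4 * m : ℝ) ≤ 2 * m ^ 2 := by
      have : (2 : ℝ) ≤ m := mod_cast hm2
      nlinarith
    exact ⟨S, hS, hcard.trans (by gcongr)⟩
end

section
/- Let m be a positive integer, let G be an m-boundedly generated group, and let L ⊴ G be a normal subgroup of finite index n. Then rank(L) ≤ m·log₂(n) + m. -/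
/-!
Let `p` be the part of the word `g 0 ^ k 0 * ⋯ * g (m-1) ^ k (m-1)` to the right of `g i ^ k i`,
with exponents already reduced. For some positive `l ≤ n = [G : L]`, `(p⁻¹ * g i * p) ^ l` lies in
`L`, so reducing `k i` modulo `l` and moving the remaining power of `g i ^ l` past `p` leaves an
exponent less than `n` and a power of a fixed element of `L`. Hence `n ^ m` left cosets of
`m`-generated subgroups of `L` cover `G`, and by B. H. Neumann's lemma one of these subgroups has
index at most `n ^ m` in `G`, that is, at most `n ^ m / n` in `L`. Adjoining an element of `L`
outside a subgroup at least halves its index in `L`.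
-/

section FiniteIndex

open scoped Pointwise

variable {G : Type*} [Group G] {H L : Subgroup G}

theorem exists_mem_forall_zpow_mul_eq (hL : L.index ≠ 0) (a p : G) :
    ∃ h ∈ L, ∀ k : ℤ, ∃ r : Fin L.index, ∃ q : ℤ, a ^ k * p = a ^ (r : ℕ) * p * h ^ q := by
  obtain ⟨l, hl0, hlL, hl⟩ := Subgroup.exists_pow_mem_of_index_ne_zero hL (p⁻¹ * a * p)
  refine ⟨_, hl, fun k => ?_⟩
  have hr0 : 0 ≤ k % l := Int.emod_nonneg k (by omega)
  have hrl : k % l < l := Int.emod_lt_of_pos k (by omega)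
  have hconj (j : ℤ) : (p⁻¹ * a * p) ^ j = p⁻¹ * a ^ j * p := by
    simpa only [inv_inv] using conj_zpow (a := p⁻¹) (b := a) (i := j)
  refine ⟨⟨(k % l).toNat, by omega⟩, k / l, ?_⟩
  calc a ^ k * p = a ^ (k % l + l * (k / l)) * p := by rw [Int.emod_add_mul_ediv]
    _ = a ^ (k % l) * p * (p⁻¹ * a ^ (l * (k / l)) * p) := by rw [zpow_add]; group
    _ = a ^ (k % l).toNat * p * ((p⁻¹ * a * p) ^ l) ^ (k / l) := by
      rw [← hconj, zpow_mul, zpow_natCast, ← zpow_natCast a, Int.toNat_of_nonneg hr0]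

theorem exists_forall_prod_zpow_mem_smul_closure (hL : L.index ≠ 0) {m : ℕ} (g : Fin m → G) :
    ∃ (p : (Fin m → Fin L.index) → G) (b : (Fin m → Fin L.index) → Fin m → G),
      (∀ r i, b r i ∈ L) ∧ ∀ k : Fin m → ℤ, ∃ r,
        (List.ofFn fun i => g i ^ k i).prod ∈
          p r • (Subgroup.closure (Set.range (b r)) : Set G) := by
  induction m with
  | zero => exact ⟨1, fun _ => g, fun _ i => i.elim0, fun k => ⟨Fin.elim0, by simp⟩⟩
  | succ m ih =>
    obtain ⟨p, b, hbL, hcover⟩ := ih (Fin.tail g)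
    choose h hhL hh using fun r => exists_mem_forall_zpow_mul_eq hL (g 0) (p r)
    refine ⟨fun r => g 0 ^ (r 0 : ℕ) * p (Fin.tail r),
      fun r => Fin.cons (h (Fin.tail r)) (b (Fin.tail r)),
      fun r => Fin.cases (hhL _) (hbL _), fun k => ?_⟩
    obtain ⟨r, y, hy, hprod⟩ := hcover (Fin.tail k)
    obtain ⟨r₀, q, hq⟩ := hh r (k 0)
    refine ⟨Fin.cons r₀ r, h r ^ q * y, ?_, ?_⟩
    · simp only [Fin.tail_cons, Fin.range_cons, Set.insert_eq, Subgroup.closure_union]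
      exact Subgroup.mul_mem_sup (zpow_mem (Subgroup.mem_closure_singleton_self _) q) hy
    · calc g 0 ^ (r₀ : ℕ) * p r * (h r ^ q * y) = g 0 ^ k 0 * (p r * y) := by
            rw [← mul_assoc, ← hq, mul_assoc]
        _ = (List.ofFn fun i => g i ^ k i).prod := by
            rw [List.ofFn_succ, List.prod_cons]
            exact congrArg (g 0 ^ k 0 * ·) hprod

theorem IsBoundedlyGeneratedBy.exists_closure_range_le {m : ℕ} {g : Fin m → G}
    (hg : IsBoundedlyGeneratedBy m g) (hL : L.index ≠ 0) :
    ∃ b : Fin m → G, Subgroup.closure (Set.range b) ≤ L ∧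
      (Subgroup.closure (Set.range b)).index ≠ 0 ∧
      (Subgroup.closure (Set.range b)).index ≤ L.index ^ m := by
  obtain ⟨p, b, hbL, hprod⟩ := exists_forall_prod_zpow_mem_smul_closure hL g
  have hcover : ⋃ r ∈ Finset.univ, p r • (Subgroup.closure (Set.range (b r)) : Set G) =
      Set.univ := by
    refine Set.eq_univ_of_forall fun x => ?_
    obtain ⟨k, rfl⟩ := hg x
    obtain ⟨r, hr⟩ := hprod k
    exact Set.mem_biUnion (Finset.mem_univ r) hr
  obtain ⟨r, -, hfin, hle⟩ := Subgroup.exists_index_le_card_of_leftCoset_cover hcover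
  exact ⟨b r, (Subgroup.closure_le L).2 (Set.range_subset_iff.2 (hbL r)), hfin.index_ne_zero,
    by simpa using hle⟩

theorem two_mul_relIndex_sup_closure_singleton_le (hHL : H ≤ L) (h0 : H.relIndex L ≠ 0) {x : G}
    (hxL : x ∈ L) (hxH : x ∉ H) :
    2 * (H ⊔ Subgroup.closure {x}).relIndex L ≤ H.relIndex L := by
  set K := H ⊔ Subgroup.closure {x}
  have hxK : x ∈ K := Subgroup.mem_sup_right (Subgroup.mem_closure_singleton_self x)
  have hKL : K ≤ L := sup_le hHL (by simpa using hxL)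
  have hmul : H.relIndex K * K.relIndex L = H.relIndex L :=
    Subgroup.relIndex_mul_relIndex H K L le_sup_left hKL
  have hHK0 : H.relIndex K ≠ 0 := left_ne_zero_of_mul (hmul ▸ h0)
  have hHK1 : H.relIndex K ≠ 1 := fun h => hxH (Subgroup.relIndex_eq_one.1 h hxK)
  rw [← hmul]
  exact Nat.mul_le_mul_right _ (by omega)

theorem exists_finset_sup_closure_eq_of_relIndex_ne_zero (hHL : H ≤ L) (h0 : H.relIndex L ≠ 0) :
    ∃ T : Finset G, H ⊔ Subgroup.closure (T : Set G) = L ∧ 2 ^ T.card ≤ H.relIndex L := by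
  classical
  induction hN : H.relIndex L using Nat.strong_induction_on generalizing H with
  | _ N ih =>
  subst hN
  by_cases hLH : L ≤ H
  · exact ⟨∅, by simpa using le_antisymm hHL hLH, by simpa using Nat.one_le_iff_ne_zero.2 h0⟩
  obtain ⟨x, hxL, hxH⟩ := SetLike.not_le_iff_exists.1 hLH
  have hhalf := two_mul_relIndex_sup_closure_singleton_le hHL h0 hxL hxH
  have hKL : H ⊔ Subgroup.closure {x} ≤ L := sup_le hHL (by simpa using hxL)
  have hK0 : (H ⊔ Subgroup.closure {x}).relIndex L ≠ 0 := fun h =>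
    h0 (Nat.eq_zero_of_zero_dvd (h ▸ Subgroup.relIndex_dvd_of_le_left L le_sup_left))
  obtain ⟨T, hT, hTcard⟩ := ih _ (by omega) hKL hK0 rfl
  refine ⟨insert x T, ?_, ?_⟩
  · rw [Finset.coe_insert, Set.insert_eq, Subgroup.closure_union, ← sup_assoc, hT]
  · calc 2 ^ (insert x T).card ≤ 2 ^ (T.card + 1) :=
          Nat.pow_le_pow_right two_pos (Finset.card_insert_le _ _)
      _ = 2 * 2 ^ T.card := pow_succ' _ _
      _ ≤ H.relIndex L := by omega

end FiniteIndex

theorem natCast_le_sub_one_mul_logb_of_two_pow_mul_le_pow {t n m : ℕ} (hn : n ≠ 0)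
    (h : 2 ^ t * n ≤ n ^ m) : (t : ℝ) ≤ (m - 1) * Real.logb 2 n := by
  have hn' : (0 : ℝ) < n := by positivity
  have hlog : Real.logb 2 (2 ^ t * n) ≤ Real.logb 2 (n ^ m) :=
    Real.logb_le_logb_of_le one_lt_two (by positivity) (by exact_mod_cast h)
  rw [Real.logb_mul (by positivity) hn'.ne', Real.logb_pow, Real.logb_pow,
    Real.logb_self_eq_one one_lt_two] at hlog
  linarith

theorem rank_le_of_bounded_generation_normal_general {G : Type*} [Group G] {m : ℕ} {g : Fin m → G}
    (hg : IsBoundedlyGeneratedBy m g) {L : Subgroup G} (hL : L.index ≠ 0) :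
    ∃ S : Finset G, Subgroup.closure (S : Set G) = L ∧
      (S.card : ℝ) ≤ (m - 1) * Real.logb 2 L.index + m := by
  classical
  obtain ⟨b, hbL, hb0, hble⟩ := hg.exists_closure_range_le hL
  have hmul := Subgroup.relIndex_mul_index hbL
  obtain ⟨T, hT, hTcard⟩ := exists_finset_sup_closure_eq_of_relIndex_ne_zero hbL
    (left_ne_zero_of_mul (hmul ▸ hb0))
  refine ⟨Finset.univ.image b ∪ T, ?_, ?_⟩
  · rw [Finset.coe_union, Subgroup.closure_union, Finset.coe_image, Finset.coe_univ,
      Set.image_univ, hT]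
  · have hTlog : (T.card : ℝ) ≤ (m - 1) * Real.logb 2 L.index :=
      natCast_le_sub_one_mul_logb_of_two_pow_mul_le_pow hL
        ((Nat.mul_le_mul_right _ hTcard).trans (hmul.trans_le hble))
    have himage : (Finset.univ.image b).card ≤ m := by
      simpa using Finset.card_image_le (s := Finset.univ) (f := b)
    have hunion : ((Finset.univ.image b ∪ T).card : ℝ) ≤ m + T.card := by
      exact_mod_cast (Finset.card_union_le _ _).trans (Nat.add_le_add_right himage _)
    linarith

/-- Let `m` be a positive integer, let `G` be an `m`-boundedly generated group, and let
`L ⊴ G` be a normal subgroup of finite index `n`.  Then `rank L ≤ m log₂ n + m`: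
there is a generating set of `L` of cardinality at most `m log₂ n + m`. -/
theorem rank_le_of_bounded_generation_normal
    {G : Type*} [Group G] (m : ℕ) (hm : 0 < m)
    (hbg : ∃ g : Fin m → G, IsBoundedlyGeneratedBy m g)
    (L : Subgroup G) (hLnormal : L.Normal) (n : ℕ) (hn : L.index = n) (hn0 : 0 < n) :
    ∃ S : Finset G, Subgroup.closure (S : Set G) = L ∧
      (S.card : ℝ) ≤ m * Real.logb 2 n + m := by
  obtain ⟨S, hS, hcard⟩ :=
    rank_le_of_bounded_generation_normal_general hbg.choose_spec (hn.trans_ne hn0.ne')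
  have hlog : 0 ≤ Real.logb 2 n := Real.logb_nonneg one_lt_two (by exact_mod_cast hn0)
  exact ⟨S, hS, by rw [hn] at hcard; linarith⟩
end

section
/- Let L be a group and let U ≤ L be a subgroup of finite index. Then d(L) ≤ d(U) + log₂([L : U]). -/
/-! Adjoin to `U` elements outside the subgroup obtained so far: each of them at least halves the
index, so at most `log₂ [L : U]` of them are needed to reach `L`. -/

section

variable {G : Type*} [Group G]

theorem two_mul_index_le_index_of_lt {H K : Subgroup G} [H.FiniteIndex] (h : H < K) :
    2 * K.index ≤ H.index := by
  have : H.IsFiniteRelIndex K := Subgroup.isFiniteRelIndex_of_finiteIndex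
  have hrel : 2 ≤ H.relIndex K := (Nat.two_le_iff _).2
    ⟨Subgroup.relIndex_ne_zero, mt Subgroup.relIndex_eq_one.1 h.not_ge⟩
  calc 2 * K.index
      ≤ H.relIndex K * K.index := Nat.mul_le_mul_right K.index hrel
    _ = H.index := Subgroup.relIndex_mul_index h.le

theorem exists_sup_closure_eq_top_and_two_pow_card_le_index (H : Subgroup G) [H.FiniteIndex] :
    ∃ F : Finset G, H ⊔ Subgroup.closure (F : Set G) = ⊤ ∧ 2 ^ F.card ≤ H.index := by
  classical
  obtain rfl | hH := eq_or_ne H ⊤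
  · exact ⟨∅, by simp⟩
  obtain ⟨g, -, hg⟩ := SetLike.exists_of_lt hH.lt_top
  have hlt : H < H ⊔ Subgroup.closure {g} := by simpa using hg
  have : (H ⊔ Subgroup.closure {g}).FiniteIndex := Subgroup.finiteIndex_of_le hlt.le
  obtain ⟨F, hF, hcard⟩ :=
    exists_sup_closure_eq_top_and_two_pow_card_le_index (H ⊔ Subgroup.closure {g})
  refine ⟨insert g F, ?_, ?_⟩
  · rwa [Finset.coe_insert, Set.insert_eq, Subgroup.closure_union, ← sup_assoc]
  · calc 2 ^ (insert g F).card
        ≤ 2 ^ (F.card + 1) := Nat.pow_le_pow_right two_pos (Finset.card_insert_le g F)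
      _ = 2 * 2 ^ F.card := pow_succ' 2 F.card
      _ ≤ 2 * (H ⊔ Subgroup.closure {g}).index := Nat.mul_le_mul_left 2 hcard
      _ ≤ H.index := two_mul_index_le_index_of_lt hlt
termination_by H.index
decreasing_by exact Subgroup.index_strictAnti hlt

theorem rank_le_rank_add_logb_index_general (U : Subgroup G) [U.FiniteIndex]
    (T : Set G) (hT : Subgroup.closure T = U) :
    ∃ F : Finset G, Subgroup.closure (T ∪ F) = ⊤ ∧ (F.card : ℝ) ≤ Real.logb 2 U.index := by
  obtain ⟨F, hF, hcard⟩ := exists_sup_closure_eq_top_and_two_pow_card_le_index U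
  refine ⟨F, by rwa [Subgroup.closure_union, hT], ?_⟩
  calc (F.card : ℝ)
      ≤ Nat.log 2 U.index := by exact_mod_cast Nat.le_log_of_pow_le one_lt_two hcard
    _ ≤ Real.logb 2 U.index := Real.natLog_le_logb _ _

end

/-- Let `L` be a group and let `U ≤ L` be a subgroup of finite index.  Then
`d(L) ≤ d(U) + log₂ [L : U]`: for every finite generating set `T` of `U` there is a
generating set `S` of `L` with `|S| ≤ |T| + log₂ [L : U]`. -/
theorem rank_le_rank_add_logb_index
    {L : Type*} [Group L] (U : Subgroup L) (hU : U.index ≠ 0)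
    (T : Finset L) (hT : Subgroup.closure (T : Set L) = U) :
    ∃ S : Finset L, Subgroup.closure (S : Set L) = ⊤ ∧
      (S.card : ℝ) ≤ T.card + Real.logb 2 U.index := by
  classical
  have : U.FiniteIndex := ⟨hU⟩
  obtain ⟨F, hF, hcard⟩ := rank_le_rank_add_logb_index_general U T hT
  refine ⟨T ∪ F, by rwa [Finset.coe_union], ?_⟩
  calc ((T ∪ F).card : ℝ)
      ≤ T.card + F.card := by exact_mod_cast Finset.card_union_le T F
    _ ≤ T.card + Real.logb 2 U.index := by gcongr
end

section
/- For every positive integer n, lcm(1, 2, …, n) ≥ 4^⌊(n−1)/2⌋; in particular lcm(1, 2, …, n) ≥ 2^n / 8, so lcm(1, …, n) grows at least exponentially in n. -/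
/-!
Put `L n k = (n + 1) * n.choose k`. Leibniz's harmonic triangle satisfies
`1 / L (n + 1) k + 1 / L (n + 1) (k + 1) = 1 / L n k`, so if `d` is a common multiple of `L n k` and
`L (n + 1) k`, then `d / L (n + 1) (k + 1) = d / L n k - d / L (n + 1) k` is an integer. Since
`L n 0 = n + 1`, induction on `k` shows that every `L n k` with `k ≤ n` divides `lcm(1, …, n + 1)`.
The `n + 1` numbers `L n k` of row `n` have mean `2 ^ n`, hence `2 ^ n ≤ lcm(1, …, n + 1)`.
-/

/-- The denominator of entry `k` of row `n` of Leibniz's harmonic triangle, both indices starting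
at `0`; it is `0` outside the triangle, that is, for `n < k`. -/
def leibnizDenom (n k : ℕ) : ℕ := (n + 1) * n.choose k

theorem leibnizDenom_zero_right (n : ℕ) : leibnizDenom n 0 = n + 1 := by
  simp [leibnizDenom]

theorem leibnizDenom_ne_zero {n k : ℕ} (hk : k ≤ n) : leibnizDenom n k ≠ 0 :=
  mul_ne_zero n.succ_ne_zero (Nat.choose_ne_zero hk)

theorem leibnizDenom_succ_left_mul (n k : ℕ) :
    leibnizDenom (n + 1) k * (n + 1 - k) = (n + 2) * leibnizDenom n k := by
  rw [leibnizDenom, leibnizDenom, mul_assoc, ← Nat.choose_mul_succ_eq, mul_comm (n.choose k)]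

theorem leibnizDenom_succ_succ_mul (n k : ℕ) :
    leibnizDenom (n + 1) (k + 1) * (k + 1) = (n + 2) * leibnizDenom n k := by
  rw [leibnizDenom, leibnizDenom, mul_assoc, ← Nat.add_one_mul_choose_eq]

theorem inv_leibnizDenom_succ_add_inv_succ_succ {K : Type*} [Field K] [CharZero K]
    {n k : ℕ} (hk : k ≤ n) :
    (leibnizDenom (n + 1) k : K)⁻¹ + (leibnizDenom (n + 1) (k + 1) : K)⁻¹ =
      (leibnizDenom n k : K)⁻¹ := by
  have hleft : (leibnizDenom (n + 1) k : K) ≠ 0 :=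
    Nat.cast_ne_zero.2 (leibnizDenom_ne_zero (by lia))
  have hright : (leibnizDenom (n + 1) (k + 1) : K) ≠ 0 :=
    Nat.cast_ne_zero.2 (leibnizDenom_ne_zero (by lia))
  have habove : (leibnizDenom n k : K) ≠ 0 := Nat.cast_ne_zero.2 (leibnizDenom_ne_zero hk)
  have hn : (n + 2 : K) ≠ 0 := by exact_mod_cast (n + 1).succ_ne_zero
  have hleft_mul :
      (leibnizDenom (n + 1) k : K) * (n + 1 - k) = (n + 2) * leibnizDenom n k := by
    have h := congrArg (Nat.cast (R := K)) (leibnizDenom_succ_left_mul n k)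
    rw [Nat.cast_mul, Nat.cast_sub (hk.trans n.le_succ)] at h
    exact_mod_cast h
  have hright_mul :
      (leibnizDenom (n + 1) (k + 1) : K) * (k + 1) = (n + 2) * leibnizDenom n k :=
    mod_cast leibnizDenom_succ_succ_mul n k
  field_simp
  apply mul_left_cancel₀ hn
  linear_combination -(leibnizDenom (n + 1) (k + 1) : K) * hleft_mul -
    (leibnizDenom (n + 1) k : K) * hright_mul

theorem dvd_of_inv_add_inv_eq_inv {a b c d : ℕ} (hb : b ≠ 0)
    (h : (a : ℚ)⁻¹ + (b : ℚ)⁻¹ = (c : ℚ)⁻¹) (ha : a ∣ d) (hc : c ∣ d) : b ∣ d := by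
  have hdiff : (d : ℚ) / b = ((d / c : ℕ) - (d / a : ℕ) : ℤ) := by
    rw [Int.cast_sub, Int.cast_natCast, Int.cast_natCast, Nat.cast_div_charZero hc,
      Nat.cast_div_charZero ha]
    linear_combination (d : ℚ) * h
  rw [div_eq_iff (Nat.cast_ne_zero.2 hb)] at hdiff
  rw [← Int.natCast_dvd_natCast]
  exact Dvd.intro_left _ (by exact_mod_cast hdiff.symm)

theorem lcmUpto_dvd_lcmUpto_of_le {m n : ℕ} (h : m ≤ n) : Nat.lcmUpto m ∣ Nat.lcmUpto n :=
  Finset.lcm_mono (Finset.Icc_subset_Icc_right h)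

theorem leibnizDenom_dvd_lcmUpto {n k : ℕ} (hk : k ≤ n) :
    leibnizDenom n k ∣ Nat.lcmUpto (n + 1) := by
  induction k generalizing n with
  | zero =>
    rw [leibnizDenom_zero_right]
    exact Finset.dvd_lcm (f := id) (Finset.mem_Icc.2 ⟨n.succ_pos, le_rfl⟩)
  | succ k ih =>
    obtain ⟨m, rfl⟩ : ∃ m, n = m + 1 := Nat.exists_eq_add_one.2 (by lia)
    have hkm : k ≤ m := by lia
    exact dvd_of_inv_add_inv_eq_inv (leibnizDenom_ne_zero hk)
      (inv_leibnizDenom_succ_add_inv_succ_succ hkm) (ih (by lia))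
      ((ih hkm).trans (lcmUpto_dvd_lcmUpto_of_le (by lia)))

theorem sum_range_leibnizDenom (n : ℕ) :
    ∑ k ∈ Finset.range (n + 1), leibnizDenom n k = (n + 1) * 2 ^ n := by
  simp only [leibnizDenom, ← Finset.mul_sum, Nat.sum_range_choose]

theorem two_pow_le_lcmUpto_succ (n : ℕ) : 2 ^ n ≤ Nat.lcmUpto (n + 1) := by
  refine le_of_mul_le_mul_left ?_ n.succ_pos
  calc
    (n + 1) * 2 ^ n = ∑ k ∈ Finset.range (n + 1), leibnizDenom n k :=
      (sum_range_leibnizDenom n).symm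
    _ ≤ ∑ _k ∈ Finset.range (n + 1), Nat.lcmUpto (n + 1) :=
      Finset.sum_le_sum fun k hk => Nat.le_of_dvd (Nat.lcmUpto_pos _)
        (leibnizDenom_dvd_lcmUpto (Finset.mem_range_succ_iff.1 hk))
    _ = (n + 1) * Nat.lcmUpto (n + 1) := by simp

/-- For every positive integer `n`, `lcm(1, 2, …, n) ≥ 4 ^ ⌊(n−1)/2⌋`; in particular
`lcm(1, …, n) ≥ 2 ^ n / 8`, so `lcm(1, …, n)` grows at least exponentially in `n`. -/
theorem lcm_range_ge_four_pow (n : ℕ) (hn : 0 < n) :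
    4 ^ ((n - 1) / 2) ≤ (Finset.Icc 1 n).lcm id ∧
      (2 : ℝ) ^ n / 8 ≤ (((Finset.Icc 1 n).lcm id : ℕ) : ℝ) := by
  obtain ⟨m, rfl⟩ : ∃ m, n = m + 1 := Nat.exists_eq_add_one.2 hn
  have hlcm : 2 ^ m ≤ (Finset.Icc 1 (m + 1)).lcm id := two_pow_le_lcmUpto_succ m
  constructor
  · calc
      4 ^ (m / 2) = 2 ^ (2 * (m / 2)) := (pow_mul 2 2 (m / 2)).symm
      _ ≤ 2 ^ m := Nat.pow_le_pow_right two_pos (Nat.mul_div_le m 2)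
      _ ≤ (Finset.Icc 1 (m + 1)).lcm id := hlcm
  · calc
      (2 : ℝ) ^ (m + 1) / 8 = 2 ^ m / 4 := by ring
      _ ≤ 2 ^ m := div_le_self (by positivity) (by norm_num)
      _ ≤ (((Finset.Icc 1 (m + 1)).lcm id : ℕ) : ℝ) := by exact_mod_cast hlcm
end

section
/- Let m be a positive integer, let G be an m-boundedly generated group, and let L ≤ G be a subgroup of finite index n. Then exp(G, L) ≤ g(n)^m, i.e., there exists a positive integer N ≤ g(n)^m such that a^N ∈ L for every a ∈ G, where g is Landau's function. -/
/-- Landau's function: `landau n` is the largest order of an element of the symmetric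
group `S_n`. -/
noncomputable def landau (n : ℕ) : ℕ :=
  Finset.univ.sup fun σ : Equiv.Perm (Fin n) => orderOf σ

/-!
A finite group boundedly generated by `g₁, …, g_m` has at most `∏ orderOf (gᵢ)` elements. The
quotient of `G` by the normal core of `L` is boundedly generated by the images of the generators and
acts faithfully on the `n` cosets of `L`, so these images have order at most `g(n)` and the quotient
has at most `g(n) ^ m` elements. Hence the index of the normal core serves as `N`.
-/

theorem orderOf_le_landau_card {α : Type*} [Finite α] (σ : Equiv.Perm α) :
    orderOf σ ≤ landau (Nat.card α) := by
  rw [← (Finite.equivFin α).permCongrHom.orderOf_eq σ]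
  exact Finset.le_sup (f := fun τ : Equiv.Perm (Fin (Nat.card α)) => orderOf τ) (Finset.mem_univ _)

namespace IsBoundedlyGeneratedBy

variable {G : Type*} [Group G] {m : ℕ} {g : Fin m → G}

theorem map (hg : IsBoundedlyGeneratedBy m g) {H : Type*} [Group H] {φ : G →* H}
    (hφ : Function.Surjective φ) : IsBoundedlyGeneratedBy m (φ ∘ g) := by
  intro y
  obtain ⟨x, rfl⟩ := hφ y
  obtain ⟨k, rfl⟩ := hg x
  exact ⟨k, by simp [map_list_prod, List.map_ofFn, Function.comp_def]⟩

theorem card_le_prod_orderOf [Finite G] (hg : IsBoundedlyGeneratedBy m g) :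
    Nat.card G ≤ ∏ i, orderOf (g i) := by
  let mulPowers (z : ∀ i, Subgroup.zpowers (g i)) : G := (List.ofFn fun i => (z i : G)).prod
  have mulPowers_surjective : Function.Surjective mulPowers := fun x =>
    let ⟨k, hk⟩ := hg x
    ⟨fun i => ⟨g i ^ k i, k i, rfl⟩, hk.symm⟩
  calc Nat.card G ≤ Nat.card (∀ i, Subgroup.zpowers (g i)) :=
        Nat.card_le_card_of_surjective mulPowers mulPowers_surjective
    _ = ∏ i, orderOf (g i) := by simp only [Nat.card_pi, Nat.card_zpowers]

theorem index_normalCore_le_landau_pow (hg : IsBoundedlyGeneratedBy m g) (L : Subgroup G)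
    [L.FiniteIndex] : L.normalCore.index ≤ landau L.index ^ m := by
  let φ : G →* Equiv.Perm (G ⧸ L) := MulAction.toPermHom G (G ⧸ L)
  calc L.normalCore.index = Nat.card φ.range := by rw [L.normalCore_eq_ker, Subgroup.index_ker]
    _ ≤ ∏ i, orderOf (φ.rangeRestrict (g i)) :=
        (hg.map φ.rangeRestrict_surjective).card_le_prod_orderOf
    _ = ∏ i, orderOf (φ (g i)) := by simp only [← Subgroup.orderOf_coe, φ.coe_rangeRestrict]
    _ ≤ ∏ _i : Fin m, landau L.index :=
        Finset.prod_le_prod' fun i _ => orderOf_le_landau_card (φ (g i))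
    _ = landau L.index ^ m := by simp only [Finset.prod_const, Finset.card_univ, Fintype.card_fin]

end IsBoundedlyGeneratedBy

/-- Let `m` be a positive integer, let `G` be an `m`-boundedly generated group, and let
`L ≤ G` be a subgroup of finite index `n`.  Then `exp(G, L) ≤ g(n) ^ m` where `g` is
Landau's function: there exists a positive integer `N ≤ g(n) ^ m` such that
`a ^ N ∈ L` for every `a ∈ G`. -/
theorem exp_le_landau_pow_of_bounded_generation
    {G : Type*} [Group G] (m : ℕ) (hm : 0 < m)
    (hbg : ∃ g : Fin m → G, IsBoundedlyGeneratedBy m g)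
    (L : Subgroup G) (n : ℕ) (hn : L.index = n) (hn0 : 0 < n) :
    ∃ N : ℕ, 0 < N ∧ N ≤ landau n ^ m ∧ ∀ a : G, a ^ N ∈ L := by
  obtain ⟨g, hg⟩ := hbg
  subst hn
  have : L.FiniteIndex := ⟨hn0.ne'⟩
  exact ⟨L.normalCore.index, Nat.pos_of_ne_zero Subgroup.FiniteIndex.index_ne_zero,
    hg.index_normalCore_le_landau_pow L, fun a => L.normalCore_le (L.normalCore.pow_index_mem a)⟩
end

section
/- Let m be a positive integer and let G be an infinite, residually finite, m-boundedly generated group. Then there exists a strictly decreasing infinite chain G ≥ H₀ > H₁ > H₂ > ⋯ of subgroups of finite index in G such that every H_i can be generated by m elements. -/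
/-!
Fix `n ≠ 0` and write each exponent in `x = g 0 ^ k 0 * ⋯ * g (m - 1) ^ k (m - 1)` as
`k i = r i + n * q i` with `0 ≤ r i < n`. Moving all the factors `g i ^ r i` to the left puts `x`
into a left coset of a subgroup generated by `m` conjugates, one of each `g i ^ n`, and both the
coset and the conjugates depend only on `r`. These finitely many cosets cover `G`, so by
B. H. Neumann's lemma one of the subgroups has finite index. When `n` is the index of a normal
subgroup, that subgroup contains all the conjugates. Hence every finite-index subgroup contains an
`m`-generated finite-index subgroup, and in an infinite residually finite group one can descend
forever.
-/

section

open scoped Pointwise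

variable {G : Type*} [Group G] {m : ℕ}

theorem exists_forall_prod_ofFn_mul_eq_mul_prod_ofFn_conj (a : Fin m → G) :
    ∃ t : Fin m → G, ∀ b : Fin m → G,
      (List.ofFn fun i => a i * b i).prod =
        (List.ofFn a).prod * (List.ofFn fun i => t i * b i * (t i)⁻¹).prod := by
  induction m with
  | zero => exact ⟨Fin.elim0, fun b => by simp⟩
  | succ m ih =>
    obtain ⟨t, ht⟩ := ih fun i => a i.succ
    -- `b 0` has to pass all the later factors `a i`.
    refine ⟨Fin.cons (List.ofFn fun i => a i.succ).prod⁻¹ t, fun b => ?_⟩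
    simp only [List.ofFn_succ, List.prod_cons, Fin.cons_zero, Fin.cons_succ, ht]
    group

theorem IsBoundedlyGeneratedBy.exists_finiteIndex_closure_conj_pow {g : Fin m → G}
    (hg : IsBoundedlyGeneratedBy m g) {n : ℕ} (hn : n ≠ 0) :
    ∃ t : Fin m → G,
      (Subgroup.closure (Set.range fun i => t i * g i ^ n * (t i)⁻¹)).FiniteIndex := by
  choose t ht using fun r : Fin m → ℤ =>
    exists_forall_prod_ofFn_mul_eq_mul_prod_ofFn_conj fun i => g i ^ r i
  let C (r : Fin m → ℤ) : Subgroup G :=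
    Subgroup.closure (Set.range fun i => t r i * g i ^ n * (t r i)⁻¹)
  let residues : Finset (Fin m → ℤ) := Fintype.piFinset fun _ => Finset.Ico 0 (n : ℤ)
  have hcover : ⋃ r ∈ residues, (List.ofFn fun i => g i ^ r i).prod • (C r : Set G) =
      Set.univ := by
    refine Set.eq_univ_of_forall fun x => ?_
    obtain ⟨k, rfl⟩ := hg x
    let r : Fin m → ℤ := fun i => k i % n
    have hr : r ∈ residues := Fintype.mem_piFinset.2 fun i =>
      Finset.mem_Ico.2 ⟨Int.emod_nonneg _ (by lia), Int.emod_lt_of_pos _ (by lia)⟩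
    have hdivmod (i : Fin m) : g i ^ k i = g i ^ r i * (g i ^ n) ^ (k i / n) := by
      rw [← zpow_natCast, ← zpow_mul, ← zpow_add, Int.emod_add_mul_ediv]
    have hmem : (List.ofFn fun i => t r i * (g i ^ n) ^ (k i / n) * (t r i)⁻¹).prod ∈ C r := by
      refine list_prod_mem (List.forall_mem_ofFn_iff.2 fun i => ?_)
      rw [← conj_zpow]
      exact zpow_mem (Subgroup.subset_closure (Set.mem_range_self i)) _
    simp only [hdivmod, ht]
    exact Set.mem_biUnion hr (Set.smul_mem_smul_set hmem)
  obtain ⟨r, -, hC⟩ := Subgroup.exists_finiteIndex_of_leftCoset_cover hcover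
  exact ⟨t r, hC⟩

theorem IsBoundedlyGeneratedBy.exists_le_finiteIndex_closure_eq {g : Fin m → G}
    (hg : IsBoundedlyGeneratedBy m g) (K : Subgroup G) [K.FiniteIndex] :
    ∃ L ≤ K, L.FiniteIndex ∧
      ∃ S : Finset G, S.card ≤ m ∧ Subgroup.closure (S : Set G) = L := by
  classical
  obtain ⟨t, ht⟩ := hg.exists_finiteIndex_closure_conj_pow
    (Subgroup.FiniteIndex.index_ne_zero (H := K.normalCore))
  refine ⟨_, (Subgroup.closure_le K).2 ?_, ht,
    Finset.univ.image fun i => t i * g i ^ K.normalCore.index * (t i)⁻¹, ?_, by simp⟩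
  · rintro _ ⟨i, rfl⟩
    exact K.normalCore_le <|
      K.normalCore_normal.conj_mem _ (K.normalCore.pow_index_mem (g i)) (t i)
  · simpa using Finset.card_image_le (s := (Finset.univ : Finset (Fin m)))

theorem exists_lt_finiteIndex_of_residuallyFinite [Infinite G] [Group.ResiduallyFinite G]
    (K : Subgroup G) [K.FiniteIndex] : ∃ L < K, L.FiniteIndex := by
  have hK : K ≠ ⊥ := by
    rintro rfl
    exact Subgroup.FiniteIndex.index_ne_zero (H := (⊥ : Subgroup G)) (by simp)
  obtain ⟨x, hxK, hx⟩ := K.bot_or_exists_ne_one.resolve_left hK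
  obtain ⟨N, hN, hxN⟩ := Group.residuallyFinite_iff_exists_finiteIndex.1 ‹_› x hx
  exact ⟨N ⊓ K, inf_lt_right.2 fun hKN => hxN (hKN hxK), inferInstance⟩

theorem exists_strict_chain_of_bounded_generation_general
    (hbg : ∃ g : Fin m → G, IsBoundedlyGeneratedBy m g)
    (hlt : ∀ K : Subgroup G, K.FiniteIndex → ∃ L < K, L.FiniteIndex) :
    ∃ H : ℕ → Subgroup G, (∀ i, H (i + 1) < H i) ∧ (∀ i, (H i).index ≠ 0) ∧
      ∀ i, ∃ S : Finset G, S.card ≤ m ∧ Subgroup.closure (S : Set G) = H i := by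
  obtain ⟨g, hg⟩ := hbg
  let P (K : Subgroup G) : Prop :=
    K.FiniteIndex ∧ ∃ S : Finset G, S.card ≤ m ∧ Subgroup.closure (S : Set G) = K
  have : Nonempty {K // P K} :=
    let ⟨K, _, hK⟩ := hg.exists_le_finiteIndex_closure_eq ⊤
    ⟨⟨K, hK⟩⟩
  have : NoMinOrder {K // P K} := by
    refine ⟨fun ⟨K, hK, _⟩ => ?_⟩
    obtain ⟨L, hLK, hL⟩ := hlt K hK
    obtain ⟨M, hML, hM⟩ := hg.exists_le_finiteIndex_closure_eq L
    exact ⟨⟨M, hM⟩, hML.trans_lt hLK⟩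
  obtain ⟨H, hH⟩ := Nat.exists_strictAnti {K // P K}
  exact ⟨fun i => H i, fun i => hH i.lt_succ_self, fun i => (H i).2.1.index_ne_zero,
    fun i => (H i).2.2⟩

end

/-- Let `m` be a positive integer and let `G` be an infinite, residually finite,
`m`-boundedly generated group (residual finiteness is stated via the equivalent
characterization: every nontrivial element avoids some finite-index normal subgroup).
Then there exists a strictly decreasing infinite chain `H 0 > H 1 > H 2 > ⋯` of
finite-index subgroups of `G`, each of which can be generated by `m` elements. -/
theorem exists_strict_chain_of_bounded_generation
    {G : Type*} [Group G] [Infinite G] (m : ℕ) (hm : 0 < m)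
    (hbg : ∃ g : Fin m → G, IsBoundedlyGeneratedBy m g)
    (hrf : ∀ x : G, x ≠ 1 → ∃ N : Subgroup G, N.Normal ∧ N.index ≠ 0 ∧ x ∉ N) :
    ∃ H : ℕ → Subgroup G, (∀ i, H (i + 1) < H i) ∧ (∀ i, (H i).index ≠ 0) ∧
      ∀ i, ∃ S : Finset G, S.card ≤ m ∧ Subgroup.closure (S : Set G) = H i := by
  have : Group.ResiduallyFinite G := Group.residuallyFinite_iff_exists_finiteIndex.2 fun x hx =>
    (hrf x hx).imp fun _ hN => ⟨⟨hN.2.1⟩, hN.2.2⟩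
  exact exists_strict_chain_of_bounded_generation_general hbg fun K _ =>
    exists_lt_finiteIndex_of_residuallyFinite K
end

section
/- Let m be a positive integer, let G be an m-boundedly generated group, and let (H_i)_{i∈ℕ} be a sequence of finite index subgroups of G with [G : H_i] → ∞. Then (rank(H_i) − 1)/[G : H_i] → 0 as i → ∞; in particular the rank gradient of any chain of finite index subgroups of G with indices tending to infinity is zero. -/
open Filter

/-- The rank of a subgroup `H` of `G`: the smallest cardinality of a (finite)
generating set of `H`. -/
noncomputable def subgroupRank {G : Type*} [Group G] (H : Subgroup G) : ℕ :=
  sInf {k : ℕ | ∃ S : Finset G, Subgroup.closure (S : Set G) = H ∧ S.card = k}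

/-!
If `G = A₁ ⋯ Aₘ` and `H` has index `n`, then the translate `Aₘ s` meets at most `n` left cosets
of `H`, in each of which it is a left translate of the finite-index subgroup `H ∩ s⁻¹ Aₘ s` of
`s⁻¹ Aₘ s`. Peeling off the factors one at a time covers `G` by at most `n ^ m` left cosets of
subgroups of `H`, each generated by boundedly many elements. By B. H. Neumann's lemma one of these
subgroups has index at most `n ^ m` in `G`. Each generator added to it, as long as it is smaller
than `H`, can be chosen to at least halve its index in `H`, so the rank of `H` is `O(log n)`.
-/

section

open scoped Pointwise

variable {G G' : Type*} [Group G] [Group G'] {H K A : Subgroup G} {n r : ℕ}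

/-- The subgroup `K` has rank at most `n`. Unlike `subgroupRank K ≤ n`, whose left side is `0` when
`K` is not finitely generated, this includes that `K` is finitely generated. -/
def RankAtMost (K : Subgroup G) (n : ℕ) : Prop :=
  ∃ S : Finset G, Subgroup.closure (S : Set G) = K ∧ S.card ≤ n

/-- All finite-index subgroups of `A` have rank at most `n`. This holds for cyclic `A` with
`n = 1`, and is what the argument needs to know about the factors of `G`. -/
def FiniteIndexRankAtMost (A : Subgroup G) (n : ℕ) : Prop :=
  ∀ K ≤ A, K.relIndex A ≠ 0 → RankAtMost K n

namespace RankAtMost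

lemma subgroupRank_le (hK : RankAtMost K n) : subgroupRank K ≤ n := by
  obtain ⟨S, hS, hcard⟩ := hK
  exact le_trans (Nat.sInf_le ⟨S, hS, rfl⟩) hcard

lemma mono (hK : RankAtMost K n) (hnr : n ≤ r) : RankAtMost K r := by
  obtain ⟨S, hS, hcard⟩ := hK
  exact ⟨S, hS, hcard.trans hnr⟩

lemma bot : RankAtMost (⊥ : Subgroup G) 0 :=
  ⟨∅, by simp, by simp⟩

lemma zpowers (g : G) : RankAtMost (Subgroup.zpowers g) 1 :=
  ⟨{g}, by simp [Subgroup.zpowers_eq_closure], by simp⟩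

lemma map (f : G →* G') (hK : RankAtMost K n) : RankAtMost (K.map f) n := by
  classical
  obtain ⟨S, rfl, hcard⟩ := hK
  exact ⟨S.image f, by rw [Finset.coe_image, f.map_closure], Finset.card_image_le.trans hcard⟩

lemma sup (hH : RankAtMost H n) (hK : RankAtMost K r) : RankAtMost (H ⊔ K) (n + r) := by
  classical
  obtain ⟨S, rfl, hS⟩ := hH
  obtain ⟨T, rfl, hT⟩ := hK
  exact ⟨S ∪ T, by rw [Finset.coe_union, Subgroup.closure_union],
    (Finset.card_union_le S T).trans (Nat.add_le_add hS hT)⟩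

lemma of_le_of_relIndex_ne_zero (hK : RankAtMost K n) (hKH : K ≤ H) (hidx : K.relIndex H ≠ 0) :
    RankAtMost H (n + Nat.log 2 (K.relIndex H)) := by
  induction hd : K.relIndex H using Nat.strong_induction_on generalizing K n with
  | _ d ih =>
    subst hd
    obtain rfl | hlt := hKH.eq_or_lt
    · simpa using hK
    obtain ⟨h, hh, hhK⟩ := SetLike.exists_of_lt hlt
    set K' := K ⊔ Subgroup.zpowers h
    have hK'H : K' ≤ H := sup_le hKH (Subgroup.zpowers_le.mpr hh)
    have hmul : K.relIndex K' * K'.relIndex H = K.relIndex H :=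
      Subgroup.relIndex_mul_relIndex _ _ _ le_sup_left hK'H
    have hne_zero : K.relIndex K' ≠ 0 ∧ K'.relIndex H ≠ 0 := by
      rwa [← mul_ne_zero_iff, hmul]
    have hne_one : K.relIndex K' ≠ 1 := fun hone =>
      hhK (Subgroup.relIndex_eq_one.mp hone
        (Subgroup.mem_sup_right (Subgroup.mem_zpowers h)))
    have htwo : 2 * K'.relIndex H ≤ K.relIndex H :=
      hmul ▸ Nat.mul_le_mul_right _ (by lia)
    have hlog : 1 + Nat.log 2 (K'.relIndex H) ≤ Nat.log 2 (K.relIndex H) := by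
      rw [add_comm, ← Nat.log_mul_base one_lt_two hne_zero.2, mul_comm]
      exact Nat.log_mono_right htwo
    exact (ih _ (by lia) (hK.sup (zpowers h)) hK'H hne_zero.2 rfl).mono (by lia)

end RankAtMost

namespace FiniteIndexRankAtMost

lemma zpowers (g : G) : FiniteIndexRankAtMost (Subgroup.zpowers g) 1 := by
  intro K hK _
  obtain ⟨k, rfl⟩ := (Subgroup.le_zpowers_iff g K).mp hK
  exact RankAtMost.zpowers _

lemma map (f : G →* G') (hA : FiniteIndexRankAtMost A n) :
    FiniteIndexRankAtMost (A.map f) n := by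
  intro K hK hidx
  have hK_eq : (K.comap f ⊓ A).map f = K := 
    SetLike.coe_injective <| (Set.image_preimage_inter f A K).trans (Set.inter_eq_left.mpr hK)
  rw [← hK_eq]
  refine (hA _ inf_le_right ?_).map f
  rwa [Subgroup.inf_relIndex_right, Subgroup.relIndex_comap]

lemma inf_finiteIndex (H : Subgroup G) [H.FiniteIndex] (hA : FiniteIndexRankAtMost A n) :
    RankAtMost (H ⊓ A) n := by
  refine hA _ inf_le_right ?_
  rw [Subgroup.inf_relIndex_right]
  exact mt Subgroup.index_eq_zero_of_relIndex_eq_zero Subgroup.FiniteIndex.index_ne_zero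

end FiniteIndexRankAtMost

lemma exists_finset_subset_inv_mul_mem (H : Subgroup G) [H.FiniteIndex] (X : Set G) :
    ∃ R : Finset G, ↑R ⊆ X ∧ R.card ≤ H.index ∧ ∀ x ∈ X, ∃ t ∈ R, t⁻¹ * x ∈ H := by
  obtain ⟨R, hRX, hR⟩ := X.exists_subset_bijOn ((↑) : G → G ⧸ H)
  have hfin : R.Finite := hR.finite_iff_finite.mpr (Set.toFinite _)
  refine ⟨hfin.toFinset, by simpa using hRX, ?_, fun x hx => ?_⟩
  · rw [← Set.ncard_eq_toFinset_card R hfin, ← hR.injOn.ncard_image, hR.image_eq]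
    exact Set.ncard_le_card _
  · obtain ⟨t, ht, htx⟩ := hR.surjOn ⟨x, hx, rfl⟩
    exact ⟨t, by simpa using ht, QuotientGroup.eq.mp htx⟩

lemma exists_finset_inv_mul_mem_inf_conj (H : Subgroup G) [H.FiniteIndex] (A : Subgroup G) (s : G) :
    ∃ R : Finset G, R.card ≤ H.index ∧ ∀ a ∈ A, ∃ t ∈ R,
      t⁻¹ * (a * s) ∈ H ⊓ A.map (MulAut.conj s⁻¹).toMonoidHom := by
  obtain ⟨R, hRA, hRcard, hR⟩ := exists_finset_subset_inv_mul_mem H ((· * s) '' (A : Set G))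
  refine ⟨R, hRcard, fun a ha => ?_⟩
  obtain ⟨t, ht, hta⟩ := hR (a * s) (Set.mem_image_of_mem _ ha)
  obtain ⟨b, hb, rfl⟩ := hRA ht
  exact ⟨b * s, ht, hta, b⁻¹ * a, A.mul_mem (A.inv_mem hb) ha, by simp [mul_assoc]⟩

lemma exists_finset_leftCoset_cover (H : Subgroup G) [H.FiniteIndex] (L : List (Subgroup G))
    (hL : ∀ A ∈ L, FiniteIndexRankAtMost A r) (s : G) :
    ∃ F : Finset (Subgroup G × G), F.card ≤ H.index ^ L.length ∧
      (∀ p ∈ F, p.1 ≤ H ∧ RankAtMost p.1 (L.length * r)) ∧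
      ∀ x ∈ (L.map ((↑) : Subgroup G → Set G)).prod, ∃ p ∈ F, x * s ∈ p.2 • (p.1 : Set G) := by
  classical
  induction L using List.reverseRecOn generalizing s with
  | nil => exact ⟨{(⊥, s)}, by simp, by simpa using RankAtMost.bot, by simp⟩
  | append_singleton L A ih =>
    simp only [List.mem_append, List.mem_singleton, or_imp, forall_and, forall_eq] at hL
    choose F hFcard hFrank hFcover using ih hL.1
    obtain ⟨R, hRcard, hRcover⟩ := exists_finset_inv_mul_mem_inf_conj H A s
    set B := H ⊓ A.map (MulAut.conj s⁻¹).toMonoidHom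
    have hB : RankAtMost B r := (hL.2.map _).inf_finiteIndex H
    refine ⟨R.biUnion fun t => (F t).image fun p => (p.1 ⊔ B, p.2), ?_, ?_, ?_⟩
    · calc _ ≤ R.card * H.index ^ L.length :=
            Finset.card_biUnion_le_card_mul _ _ _ fun t _ =>
              Finset.card_image_le.trans (hFcard t)
        _ ≤ H.index * H.index ^ L.length := Nat.mul_le_mul_right _ hRcard
        _ = H.index ^ (L ++ [A]).length := by simp [pow_succ']
    · simp only [Finset.mem_biUnion, Finset.mem_image]
      rintro _ ⟨t, -, p, hp, rfl⟩
      obtain ⟨hpH, hprank⟩ := hFrank t p hp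
      exact ⟨sup_le hpH inf_le_left, by simpa [add_mul] using hprank.sup hB⟩
    · intro x hx
      rw [List.map_append, List.prod_append, List.map_singleton, List.prod_singleton] at hx
      obtain ⟨y, hy, a, ha, rfl⟩ := hx
      obtain ⟨t, ht, htB⟩ := hRcover a ha
      obtain ⟨p, hp, v, hv, hvp⟩ := hFcover t y hy
      refine ⟨(p.1 ⊔ B, p.2), ?_, v * (t⁻¹ * (a * s)), ?_, ?_⟩
      · simp only [Finset.mem_biUnion, Finset.mem_image]
        exact ⟨t, ht, p, hp, rfl⟩
      · exact Subgroup.mul_mem_sup hv htB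
      · simp only [smul_eq_mul] at hvp ⊢
        rw [← mul_assoc, hvp]
        group

lemma RankAtMost.of_prod_eq_univ (H : Subgroup G) [H.FiniteIndex] {L : List (Subgroup G)}
    (hprod : (L.map ((↑) : Subgroup G → Set G)).prod = Set.univ)
    (hL : ∀ A ∈ L, FiniteIndexRankAtMost A r) :
    RankAtMost H (L.length * r + Nat.log 2 (H.index ^ L.length)) := by
  obtain ⟨F, hFcard, hFrank, hFcover⟩ := exists_finset_leftCoset_cover H L hL 1
  have hcover : ⋃ p ∈ F, p.2 • (p.1 : Set G) = Set.univ := by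
    refine Set.eq_univ_of_forall fun x => ?_
    simpa using hFcover x (hprod ▸ Set.mem_univ x)
  obtain ⟨⟨K, t⟩, hp, hfin, hidx⟩ := Subgroup.exists_index_le_card_of_leftCoset_cover hcover
  obtain ⟨hKH, hKrank⟩ := hFrank _ hp
  have hrel_dvd : K.relIndex H ∣ K.index := Subgroup.relIndex_dvd_index_of_le hKH
  have hrel : K.relIndex H ≤ H.index ^ L.length :=
    (Nat.le_of_dvd (Nat.pos_of_ne_zero hfin.index_ne_zero) hrel_dvd).trans (hidx.trans hFcard)
  exact (hKrank.of_le_of_relIndex_ne_zero hKH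
    (ne_zero_of_dvd_ne_zero hfin.index_ne_zero hrel_dvd)).mono
      (Nat.add_le_add_left (Nat.log_mono_right hrel) _)

lemma IsBoundedlyGeneratedBy.prod_zpowers_eq_univ {m : ℕ} {g : Fin m → G}
    (hg : IsBoundedlyGeneratedBy m g) :
    ((List.ofFn fun i => Subgroup.zpowers (g i)).map ((↑) : Subgroup G → Set G)).prod =
      Set.univ := by
  refine Set.eq_univ_of_forall fun x => ?_
  obtain ⟨k, hk⟩ := hg x
  rw [List.map_ofFn, Set.mem_prod_list_ofFn]
  exact ⟨fun i => ⟨g i ^ k i, k i, rfl⟩, hk.symm⟩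

lemma tendsto_add_mul_logb_div_atTop (a b c : ℝ) :
    Tendsto (fun x : ℝ => (a + b * Real.logb c x) / x) atTop (nhds 0) := by
  have hconst : (fun _ : ℝ => a) =o[atTop] (id : ℝ → ℝ) := Asymptotics.isLittleO_const_id_atTop a
  have hlog : (fun x => b / Real.log c * Real.log x) =o[atTop] (id : ℝ → ℝ) :=
    Real.isLittleO_log_id_atTop.const_mul_left _
  refine (hconst.add hlog).tendsto_div_nhds_zero.congr fun x => ?_
  rw [Real.logb, id, div_mul_eq_mul_div, mul_div_assoc]

theorem rank_gradient_tendsto_zero_of_bounded_generation_general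
    {L : List (Subgroup G)} (hprod : (L.map ((↑) : Subgroup G → Set G)).prod = Set.univ)
    (hL : ∀ A ∈ L, FiniteIndexRankAtMost A r)
    {ι : Type*} {l : Filter ι} {H : ι → Subgroup G}
    (hidx : Tendsto (fun i => (H i).index) l atTop) :
    Tendsto (fun i => ((subgroupRank (H i) : ℝ) - 1) / ((H i).index : ℝ)) l (nhds 0) := by
  have hreal : Tendsto (fun i => ((H i).index : ℝ)) l atTop :=
    tendsto_natCast_atTop_atTop.comp hidx
  have hlower : Tendsto (fun i => (-1 : ℝ) / (H i).index) l (nhds 0) := hreal.const_div_atTop _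
  have hupper := (tendsto_add_mul_logb_div_atTop (L.length * r) L.length 2).comp hreal
  refine tendsto_of_tendsto_of_tendsto_of_le_of_le' hlower hupper (.of_forall fun i => ?_) ?_
  · gcongr
    linarith [(subgroupRank (H i)).cast_nonneg (α := ℝ)]
  filter_upwards [hidx.eventually_ne_atTop 0] with i hi
  have : (H i).FiniteIndex := ⟨hi⟩
  have hrank : (subgroupRank (H i) : ℝ) ≤
      L.length * r + Nat.log 2 ((H i).index ^ L.length) := by
    exact_mod_cast (RankAtMost.of_prod_eq_univ (H i) hprod hL).subgroupRank_le
  have hlog : (Nat.log 2 ((H i).index ^ L.length) : ℝ) ≤ L.length * Real.logb 2 (H i).index := by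
    simpa only [Nat.cast_pow, Nat.cast_ofNat, Real.logb_pow] using
      Real.natLog_le_logb ((H i).index ^ L.length) 2
  simp only [Function.comp_apply]
  gcongr
  linarith

end

/-- Let `m` be a positive integer, let `G` be an `m`-boundedly generated group, and
let `(H i)` be a sequence of finite-index subgroups of `G` with `[G : H i] → ∞`.
Then `(rank (H i) − 1) / [G : H i] → 0`; in particular the rank gradient of any
chain of finite-index subgroups of `G` with indices tending to infinity is zero. -/
theorem rank_gradient_tendsto_zero_of_bounded_generation
    {G : Type*} [Group G] (m : ℕ) (hm : 0 < m)
    (hbg : ∃ g : Fin m → G, IsBoundedlyGeneratedBy m g)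
    (H : ℕ → Subgroup G) (hfin : ∀ i, (H i).index ≠ 0)
    (hidx : Tendsto (fun i => (H i).index) atTop atTop) :
    Tendsto (fun i => ((subgroupRank (H i) : ℝ) - 1) / ((H i).index : ℝ))
      atTop (nhds 0) := by
  obtain ⟨g, hg⟩ := hbg
  exact rank_gradient_tendsto_zero_of_bounded_generation_general hg.prod_zpowers_eq_univ
    (List.forall_mem_ofFn_iff.mpr fun i => .zpowers (g i)) hidx
end

section
/- Let G = SL₄(ℤ), let r be a positive integer, let p₁, …, p_r be the first r odd primes, and let L_r ≤ G be the preimage under the reduction map G → ∏_{i=1}^r SL₄(𝔽_{p_i}) of the subgroup ∏_{i=1}^r {±I₄}. Then L_r is a normal subgroup of finite index in G and rank(L_r) ≥ r. -/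
/-!
The order of a finite abelian group `K` divides `exp(K) ^ rank(K)`. The group `∏ {±I}` has order
`2 ^ r` and exponent `2`, hence rank at least `r`, and so has every group mapping onto it. That
`L_r` maps onto `∏ {±I}` does not need strong approximation: by the Chinese remainder theorem some
integer `e` is congruent to the prescribed sign modulo each `pᵢ`, and `e • I` can be corrected by a
multiple of `e ^ 2 - 1`, which vanishes modulo every `pᵢ`, to an integral matrix of determinant one.
-/

instance : Fact (Even (Fintype.card (Fin 4))) := ⟨⟨2, rfl⟩⟩

/-- The `i`-th odd prime (`i = 0` gives `3`): the `(i+1)`-st prime number. -/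
noncomputable def oddPrime (i : ℕ) : ℕ := Nat.nth Nat.Prime (i + 1)

/-- Simultaneous reduction map `SL₄(ℤ) → ∏_{i<r} SL₄(𝔽_{pᵢ})`, where
`p₀, …, p_{r-1}` are the first `r` odd primes. -/
noncomputable def redMap (r : ℕ) :
    Matrix.SpecialLinearGroup (Fin 4) ℤ →*
      ∀ i : Fin r, Matrix.SpecialLinearGroup (Fin 4) (ZMod (oddPrime i)) :=
  Pi.monoidHom fun i =>
    Matrix.SpecialLinearGroup.map (Int.castRingHom (ZMod (oddPrime i)))

/-- `Lr r ≤ SL₄(ℤ)` is the preimage under the reduction map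
`SL₄(ℤ) → ∏_{i<r} SL₄(𝔽_{pᵢ})` of the subgroup `∏_{i<r} {±I₄}`
(the subgroup `{±I₄}` is the cyclic subgroup generated by `-I₄`). -/
noncomputable def Lr (r : ℕ) : Subgroup (Matrix.SpecialLinearGroup (Fin 4) ℤ) :=
  Subgroup.comap (redMap r)
    (Subgroup.pi Set.univ fun _ => Subgroup.zpowers (-1))

section Group

theorem normal_zpowers_neg_one (G : Type*) [Group G] [HasDistribNeg G] :
    (Subgroup.zpowers (-1 : G)).Normal := by
  have hle : Subgroup.zpowers (-1 : G) ≤ Subgroup.center G := by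
    simp [Subgroup.mem_center_iff]
  exact ⟨fun x hx g => by rwa [Subgroup.mem_center_iff.1 (hle hx) g, mul_inv_cancel_right]⟩

theorem normal_pi {ι : Type*} {G : ι → Type*} [∀ i, Group (G i)] (I : Set ι)
    {H : ∀ i, Subgroup (G i)} (hH : ∀ i ∈ I, (H i).Normal) : (Subgroup.pi I H).Normal :=
  ⟨fun x hx g i hi => (hH i hi).conj_mem (x i) (hx i hi) (g i)⟩

theorem le_rank_of_card_eq_pow {G : Type*} [CommGroup G] [Group.FG G] {k n : ℕ} (hk : 1 < k)
    (hpow : ∀ g : G, g ^ k = 1) (hcard : Nat.card G = k ^ n) : n ≤ Group.rank G :=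
  (Nat.pow_dvd_pow_iff_le_right hk).1 (hcard ▸ card_dvd_exponent_pow_rank' G hpow)

theorem card_le_rank_pi_zpowers {ι : Type*} [Finite ι] {G : ι → Type*} [∀ i, Group (G i)]
    {z : ∀ i, G i} {k : ℕ} (hk : 1 < k) (hz : ∀ i, orderOf (z i) = k)
    [Group.FG (Subgroup.pi Set.univ fun i => Subgroup.zpowers (z i))] :
    Nat.card ι ≤ Group.rank (Subgroup.pi Set.univ fun i => Subgroup.zpowers (z i)) := by
  set K := Subgroup.pi Set.univ fun i => Subgroup.zpowers (z i)
  have hmem (x : K) (i : ι) : x.1 i ∈ Subgroup.zpowers (z i) := x.2 i (Set.mem_univ i)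
  have hcomm (x y : K) : x * y = y * x := Subtype.ext <| funext fun i =>
    setLike_mul_comm (hmem x i) (hmem y i)
  have hpow (x : K) : x ^ k = 1 := Subtype.ext <| funext fun i =>
    orderOf_dvd_iff_pow_eq_one.1 (hz i ▸ orderOf_dvd_of_mem_zpowers (hmem x i))
  have hcard : Nat.card K = k ^ Nat.card ι := calc
    Nat.card K = Nat.card (∀ i, Subgroup.zpowers (z i)) := Nat.card_congr (Equiv.Set.univPi _)
    _ = k ^ Nat.card ι := by
      cases nonempty_fintype ι
      simp [Nat.card_pi, hz]
  let _ : CommGroup K := { mul_comm := hcomm }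
  exact le_rank_of_card_eq_pow hk hpow hcard

theorem rank_le_rank_comap {G H : Type*} [Group G] [Group H] {f : G →* H} {K : Subgroup H}
    (hK : K ≤ f.range) [Group.FG K] [Group.FG (K.comap f)] :
    Group.rank K ≤ Group.rank (K.comap f) :=
  Group.rank_le_of_surjective (f.subgroupComap K) fun ⟨y, hy⟩ =>
    let ⟨x, hx⟩ := hK hy
    ⟨⟨x, by rwa [Subgroup.mem_comap, hx]⟩, Subtype.ext hx⟩

end Group

section Matrix

open Matrix Kronecker

variable {R : Type*} [CommRing R]

-- With `t = e ^ 2 - 1`, a `2 × 2` matrix `C` of trace `-e` and determinant `1` gives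
-- `det (e + t C) = e ^ 2 - t e ^ 2 + t ^ 2 = e ^ 2 - t = 1`.
theorem det_smul_one_add_fin_two (e : R) :
    (e • (1 : Matrix (Fin 2) (Fin 2) R) + (e ^ 2 - 1) • !![-e, 1; -1, 0]).det = 1 := by
  simp [det_fin_two]
  ring

variable (n : Type*) [Fintype n] [DecidableEq n] [hn : Fact (Even (Fintype.card n))]

theorem exists_specialLinearGroup_eq_smul_one_add (e : R) :
    ∃ (A : SpecialLinearGroup n R) (B : Matrix n n R),
      (A : Matrix n n R) = e • 1 + (e ^ 2 - 1) • B := by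
  obtain ⟨m, hm⟩ := hn.out
  let σ : Fin m × Fin 2 ≃ n := Fintype.equivOfCardEq (by simp [hm, mul_two])
  let C : Matrix (Fin 2) (Fin 2) R := !![-e, 1; -1, 0]
  have hblock : e • (1 : Matrix n n R) + (e ^ 2 - 1) • reindex σ σ (1 ⊗ₖ C) =
      reindex σ σ (1 ⊗ₖ (e • 1 + (e ^ 2 - 1) • C)) := by
    simp [kronecker_add, kronecker_smul, submatrix_add, submatrix_smul]
  refine ⟨⟨_, ?_⟩, reindex σ σ (1 ⊗ₖ C), hblock.symm⟩
  rw [det_reindex_self, det_kronecker, det_smul_one_add_fin_two, det_one, one_pow, one_pow, one_mul]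

theorem exists_map_specialLinearGroup_eq_smul_one (e : R) :
    ∃ A : SpecialLinearGroup n R, ∀ {S : Type*} [CommRing S] (f : R →+* S), f e ^ 2 = 1 →
      (SpecialLinearGroup.map f A : Matrix n n S) = f e • 1 := by
  obtain ⟨A, B, hA⟩ := exists_specialLinearGroup_eq_smul_one_add n e
  refine ⟨A, fun f he => ?_⟩
  rw [SpecialLinearGroup.map_apply_coe, hA]
  ext i j
  simp [he, one_apply, apply_ite f]

variable {n}

theorem exists_eq_smul_one_of_mem_zpowers_neg_one {x : SpecialLinearGroup n R}
    (hx : x ∈ Subgroup.zpowers (-1)) : ∃ u : R, u ^ 2 = 1 ∧ (x : Matrix n n R) = u • 1 := by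
  obtain ⟨k, rfl⟩ := hx
  rcases k.even_or_odd with hk | hk
  · exact ⟨1, by simp [hk.neg_one_zpow]⟩
  · exact ⟨-1, by simp [hk.neg_one_zpow]⟩

theorem orderOf_neg_one_specialLinearGroup [Nonempty n] (hR : (-1 : R) ≠ 1) :
    orderOf (-1 : SpecialLinearGroup n R) = 2 := by
  refine orderOf_eq_prime neg_one_sq fun h => hR ?_
  let i : n := Classical.arbitrary n
  simpa using congrArg (fun A : SpecialLinearGroup n R => A i i) h

end Matrix

section Reduction

open Matrix

variable (n : Type*) [Fintype n] [DecidableEq n] {ι : Type*} (N : ι → ℕ)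

/-- Simultaneous reduction `SLₙ(ℤ) → ∏ SLₙ(ℤ/Nᵢ)`; `redMap` is the case `n = 4` of the first odd
primes. -/
def reductionMap : SpecialLinearGroup n ℤ →* ∀ i, SpecialLinearGroup n (ZMod (N i)) :=
  MonoidHom.pi fun i => SpecialLinearGroup.map (Int.castRingHom (ZMod (N i)))

variable [Fact (Even (Fintype.card n))]

/-- The group `∏ {±I}` in `∏ SLₙ(ℤ/Nᵢ)`, for even `n`, with `{±I}` encoded as the cyclic group
generated by `-I`. -/
def signSubgroup : Subgroup (∀ i, SpecialLinearGroup n (ZMod (N i))) :=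
  Subgroup.pi Set.univ fun _ => Subgroup.zpowers (-1)

/-- The group of matrices in `SLₙ(ℤ)` congruent to `I` or `-I` modulo each `Nᵢ`; `Lr` is the case
`n = 4` of the first odd primes. -/
def signCongruenceSubgroup : Subgroup (SpecialLinearGroup n ℤ) :=
  (signSubgroup n N).comap (reductionMap n N)

theorem normal_signCongruenceSubgroup : (signCongruenceSubgroup n N).Normal :=
  (normal_pi _ fun _ _ => normal_zpowers_neg_one _).comap _

variable {N} [Finite ι]

theorem exists_intCast_eq_of_pairwise_coprime (hN : Pairwise (Function.onFun Nat.Coprime N))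
    (u : ∀ i, ZMod (N i)) : ∃ e : ℤ, ∀ i, (e : ZMod (N i)) = u i := by
  cases nonempty_fintype ι
  obtain ⟨a, ha⟩ := (ZMod.prodEquivPi N hN).surjective u
  obtain ⟨e, rfl⟩ := ZMod.intCast_surjective a
  exact ⟨e, fun i => by simpa using congrFun ha i⟩

theorem signSubgroup_le_range_reductionMap (hN : Pairwise (Function.onFun Nat.Coprime N)) :
    signSubgroup n N ≤ (reductionMap n N).range := fun x hx => by
  choose u hu_sq hxu using fun i =>
    exists_eq_smul_one_of_mem_zpowers_neg_one (hx i (Set.mem_univ i))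
  obtain ⟨e, he⟩ := exists_intCast_eq_of_pairwise_coprime hN u
  obtain ⟨A, hA⟩ := exists_map_specialLinearGroup_eq_smul_one n e
  refine ⟨A, funext fun i => Subtype.ext ?_⟩
  calc (SpecialLinearGroup.map (Int.castRingHom (ZMod (N i))) A : Matrix n n (ZMod (N i)))
      = (e : ZMod (N i)) • 1 := hA _ (by rw [eq_intCast, he, hu_sq])
    _ = x i := by rw [he, hxu]

theorem rank_Lr_ge_general [Nonempty n] (hN : Pairwise (Function.onFun Nat.Coprime N))
    (hN_two : ∀ i, 2 < N i) :
    (signCongruenceSubgroup n N).Normal ∧ (signCongruenceSubgroup n N).index ≠ 0 ∧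
      ∀ S : Finset (SpecialLinearGroup n ℤ),
        Subgroup.closure (S : Set (SpecialLinearGroup n ℤ)) = signCongruenceSubgroup n N →
          Nat.card ι ≤ S.card := by
  have hNeZero (i : ι) : NeZero (N i) := ⟨(Nat.zero_lt_of_lt (hN_two i)).ne'⟩
  have horder (i : ι) : orderOf (-1 : SpecialLinearGroup n (ZMod (N i))) = 2 :=
    have : Fact (2 < N i) := ⟨hN_two i⟩
    orderOf_neg_one_specialLinearGroup ZMod.neg_one_ne_one
  refine ⟨normal_signCongruenceSubgroup n N, ?_, fun S hS => ?_⟩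
  · rw [signCongruenceSubgroup, Subgroup.index_comap]
    exact Subgroup.FiniteIndex.index_ne_zero
  · rw [signCongruenceSubgroup] at hS
    have : Group.FG ((signSubgroup n N).comap (reductionMap n N)) := hS ▸ inferInstance
    calc Nat.card ι
        ≤ Group.rank (signSubgroup n N) := card_le_rank_pi_zpowers one_lt_two horder
      _ ≤ Group.rank ((signSubgroup n N).comap (reductionMap n N)) :=
          rank_le_rank_comap (signSubgroup_le_range_reductionMap n hN)
      _ = Group.rank (Subgroup.closure (S : Set (SpecialLinearGroup n ℤ))) :=
          Subgroup.rank_congr hS.symm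
      _ ≤ S.card := Subgroup.rank_closure_finset_le_card S

end Reduction

theorem two_lt_oddPrime (i : ℕ) : 2 < oddPrime i :=
  (Nat.add_two_le_nth_prime (i + 1)).trans_lt' (by lia)

theorem pairwise_coprime_oddPrime : Pairwise (Function.onFun Nat.Coprime oddPrime) := fun _ _ hij =>
  (Nat.coprime_primes (Nat.prime_nth_prime _) (Nat.prime_nth_prime _)).2 fun h =>
    hij (Nat.succ_injective (Nat.nth_injective Nat.infinite_setOfPred_prime h))

/-- Let `G = SL₄(ℤ)`, let `r` be a positive integer, let `p₁, …, p_r` be the first `r`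
odd primes, and let `L_r ≤ G` be the preimage under the reduction map
`G → ∏ SL₄(𝔽_{pᵢ})` of `∏ {±I₄}`.  Then `L_r` is a normal subgroup of finite index
in `G`, and `rank L_r ≥ r`: every generating set of `L_r` has at least `r` elements. -/
theorem rank_Lr_ge
    (r : ℕ) (hr : 0 < r) :
    (Lr r).Normal ∧ (Lr r).index ≠ 0 ∧
      ∀ S : Finset (Matrix.SpecialLinearGroup (Fin 4) ℤ),
        Subgroup.closure (S : Set (Matrix.SpecialLinearGroup (Fin 4) ℤ)) = Lr r →
          r ≤ S.card := by
  simpa only [Nat.card_fin] using! rank_Lr_ge_general (Fin 4)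
    (pairwise_coprime_oddPrime.comp_of_injective Fin.val_injective)
    fun i : Fin r => two_lt_oddPrime i
end

section
/- For all sufficiently large positive integers r there exists a normal subgroup L of G = SL₄(ℤ) of finite index n = [G : L] such that rank(L) ≥ r and log(n)/log(log(n)) ≤ 48r; consequently rank(L) ≥ log(n)/(48·log(log(n))), where log denotes the natural logarithm. Thus the rank of finite index normal subgroups of SL₄(ℤ) can grow at least like log(n)/(48·log log(n)) as a function of the index n. -/
/-!
Let `N` be even and let `M` be a product of `r` distinct odd primes `p ≤ r ^ 3`. Take for `L` the
kernel of `SL_N(ℤ) → PSL_N(ℤ/M)`. Sending a matrix that is scalar modulo `M` to this scalar is a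
homomorphism `L → (ℤ/M)ˣ`, and its image contains the `2 ^ r` square roots of one. An abelian group
with `2 ^ r` elements of order dividing two has rank at least `r`, hence so does `L`. On the other
hand `[SL_N(ℤ) : L] ≤ M ^ (N ^ 2) ≤ r ^ (3 N ^ 2 r)`.
-/

open Matrix
open scoped Kronecker

section PowerTorsion

variable {A : Type*} [CommGroup A] [Finite A]

-- `A[d]` has as many elements as `A / A ^ d`, a quotient of `A` of exponent dividing `d`.
lemma card_ker_powMonoidHom_dvd_pow_rank (d : ℕ) :
    Nat.card (powMonoidHom d : A →* A).ker ∣ d ^ Group.rank A := by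
  have hexp : ∀ q : A ⧸ (powMonoidHom d : A →* A).range, q ^ d = 1 := by
    rintro ⟨a⟩
    exact (QuotientGroup.eq_one_iff (a ^ d)).2 ⟨a, rfl⟩
  rw [← Subgroup.index_range, Subgroup.index_eq_card]
  exact (card_dvd_exponent_pow_rank' _ hexp).trans
    (pow_dvd_pow d (Group.rank_le_of_surjective _ (QuotientGroup.mk'_surjective _)))

lemma card_le_pow_rank_of_le_range {G : Type*} [Group G] [Group.FG G] (φ : G →* A) {T : Subgroup A}
    (hT : T ≤ φ.range) {d : ℕ} [NeZero d] (hd : ∀ t ∈ T, t ^ d = 1) :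
    Nat.card T ≤ d ^ Group.rank G := by
  let j : T → (powMonoidHom d : φ.range →* φ.range).ker := fun t =>
    ⟨⟨t, hT t.2⟩, Subtype.ext (hd t t.2)⟩
  have hj : Function.Injective j := fun s t h => Subtype.ext (congrArg (fun x => x.1.1) h)
  calc Nat.card T ≤ Nat.card (powMonoidHom d : φ.range →* φ.range).ker :=
        Nat.card_le_card_of_injective j hj
    _ ≤ d ^ Group.rank φ.range :=
        Nat.le_of_dvd (pow_pos (NeZero.pos d) _) (card_ker_powMonoidHom_dvd_pow_rank d)
    _ ≤ d ^ Group.rank G := Nat.pow_le_pow_right (NeZero.pos d)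
        (Group.rank_le_of_surjective φ.rangeRestrict φ.rangeRestrict_surjective)

end PowerTorsion

section ScalarLift

variable {R S : Type*} [CommRing R] [CommRing S] {f : R →+* S}

lemma exists_SL2_map_eq_scalar_of_sq_eq_one (hf : Function.Surjective f) {x : S} (hx : x ^ 2 = 1) :
    ∃ g : SpecialLinearGroup (Fin 2) R,
      (g : Matrix (Fin 2) (Fin 2) R).map f = scalar (Fin 2) x := by
  obtain ⟨e, rfl⟩ := hf x
  obtain ⟨k, hk, hfk⟩ : ∃ k, e ^ 2 = 1 + k ∧ f k = 0 :=
    ⟨e ^ 2 - 1, by ring, by rw [map_sub, map_pow, hx, map_one, sub_self]⟩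
  refine ⟨⟨!![e, k; -k, e * (1 - k)], ?_⟩, ?_⟩
  · rw [det_fin_two_of]
    linear_combination (1 - k) * hk
  · ext i j
    fin_cases i <;> fin_cases j <;> simp [hfk]

lemma exists_SL_map_eq_scalar_of_sq_eq_one {ι : Type*} [Fintype ι] [DecidableEq ι]
    (hι : Even (Fintype.card ι)) (hf : Function.Surjective f) {x : S} (hx : x ^ 2 = 1) :
    ∃ g : SpecialLinearGroup ι R, (g : Matrix ι ι R).map f = scalar ι x := by
  obtain ⟨m, hm⟩ := hι.exists_two_nsmul
  let e : Fin 2 × Fin m ≃ ι := Fintype.equivOfCardEq (by simp [hm])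
  obtain ⟨g, hg⟩ := exists_SL2_map_eq_scalar_of_sq_eq_one hf hx
  refine ⟨⟨reindex e e (g ⊗ₖ (1 : Matrix (Fin m) (Fin m) R)), ?_⟩, ?_⟩
  · rw [det_reindex_self, det_kronecker, Matrix.SpecialLinearGroup.det_coe, det_one, one_pow,
      one_pow, one_mul]
  · calc (reindex e e ((g : Matrix (Fin 2) (Fin 2) R) ⊗ₖ (1 : Matrix (Fin m) (Fin m) R))).map f
        = reindex e e ((g : Matrix (Fin 2) (Fin 2) R).map f ⊗ₖ (1 : Matrix (Fin m) (Fin m) S)) := by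
          ext
          simp [one_apply, apply_ite f]
      _ = scalar ι x := by
          rw [hg, scalar_apply, ← diagonal_one, diagonal_kronecker_diagonal, reindex_apply,
            submatrix_diagonal_equiv]
          exact congrArg diagonal (funext fun _ => mul_one x)

end ScalarLift

section ProjectiveCongruenceSubgroup

variable (ι : Type*) [Fintype ι] [DecidableEq ι] {R S : Type*} [CommRing R] [CommRing S]

/-- The kernel of `SL_ι(R) → PSL_ι(S)` induced by a ring homomorphism `f : R → S`, encoded as the
preimage of the center of `SL_ι(S)`. For the reduction `ℤ → ℤ/M` this is a projective version of the
principal congruence subgroup of level `M`. -/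
def projectiveCongruenceSubgroup (f : R →+* S) : Subgroup (SpecialLinearGroup ι R) :=
  (Subgroup.center (SpecialLinearGroup ι S)).comap (SpecialLinearGroup.map f)

instance projectiveCongruenceSubgroup_normal (f : R →+* S) :
    (projectiveCongruenceSubgroup ι f).Normal :=
  Subgroup.normal_comap _

instance projectiveCongruenceSubgroup_finiteIndex [Finite S] (f : R →+* S) :
    (projectiveCongruenceSubgroup ι f).FiniteIndex where
  index_ne_zero := by
    rw [projectiveCongruenceSubgroup, Subgroup.index_comap]
    exact Subgroup.FiniteIndex.index_ne_zero

lemma index_projectiveCongruenceSubgroup_le [Finite S] (f : R →+* S) :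
    (projectiveCongruenceSubgroup ι f).index ≤ Nat.card S ^ Fintype.card ι ^ 2 := by
  rw [projectiveCongruenceSubgroup, Subgroup.index_comap]
  calc (Subgroup.center (SpecialLinearGroup ι S)).relIndex (SpecialLinearGroup.map f).range
      ≤ Nat.card (SpecialLinearGroup.map (n := ι) f).range :=
        Nat.le_of_dvd Nat.card_pos (Subgroup.relIndex_dvd_card _ _)
    _ ≤ Nat.card (SpecialLinearGroup ι S) := Subgroup.card_le_card_group _
    _ ≤ Nat.card (Matrix ι ι S) := Nat.card_le_card_of_injective _ Subtype.coe_injective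
    _ = Nat.card S ^ Fintype.card ι ^ 2 := by
        simp only [Matrix, Nat.card_pi, Finset.prod_const, Finset.card_univ, ← pow_mul, sq]

variable {ι} {f : R →+* S}

lemma transvection_mem_projectiveCongruenceSubgroup_iff {i j : ι} (hij : i ≠ j) (b : R) :
    SpecialLinearGroup.transvection hij b ∈ projectiveCongruenceSubgroup ι f ↔ f b = 0 := by
  have hmap : SpecialLinearGroup.map f (SpecialLinearGroup.transvection hij b) =
      SpecialLinearGroup.transvection hij (f b) := by
    ext
    simp [SpecialLinearGroup.transvection_coe, single_apply, one_apply, apply_ite f]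
  rw [projectiveCongruenceSubgroup, Subgroup.mem_comap, hmap,
    SpecialLinearGroup.transvection_mem_center_iff]

lemma card_le_index_projectiveCongruenceSubgroup [Nontrivial ι] [Finite S]
    (hf : Function.Surjective f) : Nat.card S ≤ (projectiveCongruenceSubgroup ι f).index := by
  obtain ⟨i, j, hij⟩ := exists_pair_ne ι
  let t : S → SpecialLinearGroup ι R ⧸ projectiveCongruenceSubgroup ι f := fun a =>
    SpecialLinearGroup.transvection hij (Function.surjInv hf a)
  refine Nat.card_le_card_of_injective t fun a b hab => ?_
  have hmem := QuotientGroup.eq.1 hab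
  rw [SpecialLinearGroup.transvection_inv, ← SpecialLinearGroup.transvection_add,
    transvection_mem_projectiveCongruenceSubgroup_iff, map_add, map_neg,
    Function.surjInv_eq hf, Function.surjInv_eq hf] at hmem
  exact neg_add_eq_zero.1 hmem

/-- The homomorphism sending a matrix whose image under `f` is a scalar matrix to that scalar, which
is read off from an arbitrary diagonal entry `i`. -/
def scalarUnit (f : R →+* S) (i : ι) : projectiveCongruenceSubgroup ι f →* Sˣ :=
  (rootsOfUnity (Fintype.card ι) S).subtype.comp
    ((SpecialLinearGroup.center_equiv_rootsOfUnity' i).toMonoidHom.comp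
      ((SpecialLinearGroup.map f).subgroupComap _))

lemma coe_scalarUnit (i : ι) (g : projectiveCongruenceSubgroup ι f) :
    (scalarUnit f i g : S) = f (g.1 i i) :=
  rfl

lemma rootsOfUnity_two_le_range_scalarUnit (hι : Even (Fintype.card ι))
    (hf : Function.Surjective f) (i : ι) : rootsOfUnity 2 S ≤ (scalarUnit f i).range := by
  intro u hu
  obtain ⟨g, hg⟩ := exists_SL_map_eq_scalar_of_sq_eq_one hι hf ((mem_rootsOfUnity' 2 u).1 hu)
  have hcenter : SpecialLinearGroup.map f g ∈ Subgroup.center (SpecialLinearGroup ι S) :=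
    Matrix.SpecialLinearGroup.mem_center_iff.2 ⟨u, (mem_rootsOfUnity' _ u).1
      (rootsOfUnity_le_of_dvd hι.two_dvd hu), hg.symm⟩
  refine ⟨⟨g, hcenter⟩, Units.ext ?_⟩
  rw [coe_scalarUnit, ← Matrix.map_apply (f := f), hg, scalar_apply, diagonal_apply_eq]

lemma card_rootsOfUnity_two_le_two_pow_card_of_closure_eq [Nonempty ι] [Finite S]
    (hι : Even (Fintype.card ι)) (hf : Function.Surjective f)
    {X : Finset (SpecialLinearGroup ι R)}
    (hX : Subgroup.closure (X : Set (SpecialLinearGroup ι R)) = projectiveCongruenceSubgroup ι f) :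
    Nat.card (rootsOfUnity 2 S) ≤ 2 ^ X.card := by
  have : Group.FG (projectiveCongruenceSubgroup ι f) := hX ▸ inferInstance
  have hrank : Group.rank (projectiveCongruenceSubgroup ι f) ≤ X.card :=
    (Subgroup.rank_congr hX.symm).trans_le (Subgroup.rank_closure_finset_le_card X)
  have hrange := rootsOfUnity_two_le_range_scalarUnit hι hf (Classical.arbitrary ι)
  exact (card_le_pow_rank_of_le_range _ hrange fun _ => id).trans
    (Nat.pow_le_pow_right two_pos hrank)

end ProjectiveCongruenceSubgroup

section SquareRootsOfOne

variable {κ : Type*} [Fintype κ]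

lemma two_pow_card_le_card_rootsOfUnity_pi {R : κ → Type*} [∀ k, CommRing (R k)]
    [∀ k, Finite (R k)] (h : ∀ k, (-1 : R k) ≠ 1) :
    2 ^ Fintype.card κ ≤ Nat.card (rootsOfUnity 2 (∀ k, R k)) := by
  let s : (κ → ℤˣ) → rootsOfUnity 2 (∀ k, R k) := fun u =>
    rootsOfUnity.mkOfPowEq (fun k => ((u k : ℤ) : R k)) <| by
      ext k
      rw [Pi.pow_apply, Pi.one_apply]
      exact_mod_cast congrArg (fun v : ℤˣ => ((v : ℤ) : R k)) (Int.units_sq (u k))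
  have hs : Function.Injective s := fun u v huv => funext fun k => by
    have huvk : ((u k : ℤ) : R k) = ((v k : ℤ) : R k) := congrArg (fun x => x.1.1 k) huv
    rcases Int.units_eq_one_or (u k) with hu | hu <;>
      rcases Int.units_eq_one_or (v k) with hv | hv <;>
      simp_all [(h k).symm]
  calc 2 ^ Fintype.card κ = Nat.card (κ → ℤˣ) := by
        rw [Nat.card_fun, Nat.card_eq_fintype_card, Nat.card_eq_fintype_card,
          Fintype.card_units_int]
    _ ≤ Nat.card (rootsOfUnity 2 (∀ k, R k)) := Nat.card_le_card_of_injective s hs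

lemma two_pow_card_le_card_rootsOfUnity_zmod {a : κ → ℕ} (ha : ∀ k, 2 < a k)
    (hcop : Pairwise (Function.onFun Nat.Coprime a)) :
    2 ^ Fintype.card κ ≤ Nat.card (rootsOfUnity 2 (ZMod (∏ k, a k))) := by
  have (k : κ) : NeZero (a k) := ⟨by have := ha k; omega⟩
  have (k : κ) : Fact (2 < a k) := ⟨ha k⟩
  rw [Nat.card_congr ((ZMod.prodEquivPi a hcop).toMulEquiv.restrictRootsOfUnity 2).toEquiv]
  exact two_pow_card_le_card_rootsOfUnity_pi fun _ => ZMod.neg_one_ne_one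

end SquareRootsOfOne

section Primes

open scoped Nat.Prime

lemma two_pow_le_succ_pow_primeCounting_succ (n : ℕ) : 2 ^ n ≤ (n + 1) ^ (π n + 1) :=
  calc 2 ^ n ≤ (n + 1) * n.lcmUpto := Chebyshev.two_pow_le_mul_lcmUpto n
    _ ≤ (n + 1) * (n + 1) ^ π n := by
        gcongr
        rw [Nat.lcmUpto_eq_prod_pow_log, ← Nat.primesLE_card_eq_primeCounting]
        exact Finset.prod_le_pow_card _ _ _ fun p _ => Nat.pow_log_le_add_one p n
    _ = (n + 1) ^ (π n + 1) := (pow_succ' _ _).symm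

lemma lt_primeCounting_cube {r : ℕ} (hr : 4 ≤ r) : r < π (r ^ 3) := by
  by_contra! hπ
  have hcube : r ^ 3 + 1 ≤ 2 ^ (3 * r) :=
    calc r ^ 3 + 1 ≤ (r + 1) ^ 3 := by ring_nf; omega
      _ ≤ (2 ^ r) ^ 3 := Nat.pow_le_pow_left Nat.lt_two_pow_self 3
      _ = 2 ^ (3 * r) := by rw [← pow_mul, mul_comm]
  have hpow : 2 ^ r ^ 3 ≤ 2 ^ (3 * r * (r + 1)) :=
    calc 2 ^ r ^ 3 ≤ (r ^ 3 + 1) ^ (π (r ^ 3) + 1) := two_pow_le_succ_pow_primeCounting_succ _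
      _ ≤ (r ^ 3 + 1) ^ (r + 1) := Nat.pow_le_pow_right (Nat.succ_pos _) (by omega)
      _ ≤ (2 ^ (3 * r)) ^ (r + 1) := Nat.pow_le_pow_left hcube _
      _ = 2 ^ (3 * r * (r + 1)) := (pow_mul _ _ _).symm
  have hle : r ^ 3 ≤ 3 * r * (r + 1) := (Nat.pow_le_pow_iff_right one_lt_two).1 hpow
  nlinarith [Nat.mul_le_mul hr hr]

lemma exists_finset_odd_primes_le_cube {r : ℕ} (hr : 4 ≤ r) :
    ∃ P : Finset ℕ, P.card = r ∧ ∀ p ∈ P, p.Prime ∧ 2 < p ∧ p ≤ r ^ 3 := by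
  have hcard : r ≤ ((Nat.primesLE (r ^ 3)).erase 2).card :=
    calc r ≤ π (r ^ 3) - 1 := Nat.le_sub_one_of_lt (lt_primeCounting_cube hr)
      _ = (Nat.primesLE (r ^ 3)).card - 1 := by rw [Nat.primesLE_card_eq_primeCounting]
      _ ≤ _ := Finset.pred_card_le_card_erase
  obtain ⟨P, hP, hPr⟩ := Finset.exists_subset_card_eq hcard
  refine ⟨P, hPr, fun p hp => ?_⟩
  obtain ⟨hp2, hmem⟩ := Finset.mem_erase.1 (hP hp)
  obtain ⟨hle, hprime⟩ := Nat.mem_primesLE.1 hmem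
  exact ⟨hprime, lt_of_le_of_ne hprime.two_le hp2.symm, hle⟩

lemma exists_modulus_two_pow_le_card_rootsOfUnity {r : ℕ} (hr : 4 ≤ r) :
    ∃ M : ℕ, 3 ^ r ≤ M ∧ M ≤ r ^ (3 * r) ∧ 2 ^ r ≤ Nat.card (rootsOfUnity 2 (ZMod M)) := by
  obtain ⟨P, rfl, hP⟩ := exists_finset_odd_primes_le_cube hr
  refine ⟨∏ p : P, (p : ℕ), ?_, ?_, ?_⟩
  · rw [Finset.prod_coe_sort P fun p => p]
    exact Finset.pow_card_le_prod P _ 3 fun p hp => (hP p hp).2.1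
  · rw [Finset.prod_coe_sort P fun p => p, pow_mul]
    exact Finset.prod_le_pow_card P _ _ fun p hp => (hP p hp).2.2
  · have hcop : Pairwise (Function.onFun Nat.Coprime fun p : P => (p : ℕ)) := fun p q hpq =>
      (Nat.coprime_primes (hP p p.2).1 (hP q q.2).1).2 (Subtype.coe_injective.ne hpq)
    simpa only [Fintype.card_coe] using
      two_pow_card_le_card_rootsOfUnity_zmod (fun p : P => (hP p p.2).2.1) hcop

end Primes

section LogLog

open Real

lemma log_div_log_log_le_of_log_le_mul_log {x y c : ℝ} (hy : 1 < y) (hlow : y ≤ log x)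
    (hup : log x ≤ c * log y) : log x / log (log x) ≤ c := by
  have hlogy : 0 < log y := log_pos hy
  have hloglog : log y ≤ log (log x) := log_le_log (by linarith) hlow
  have hc : 0 ≤ c := nonneg_of_mul_nonneg_left (by linarith) hlogy
  rw [div_le_iff₀ (hlogy.trans_le hloglog)]
  exact hup.trans (mul_le_mul_of_nonneg_left hloglog hc)

lemma log_div_log_log_le_of_three_pow_le_of_le_pow {n r k : ℕ} (hr : 1 < r) (hlow : 3 ^ r ≤ n)
    (hup : n ≤ r ^ k) : log n / log (log n) ≤ k := by
  have hn : 0 < n := (pow_pos three_pos r).trans_le hlow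
  have hlog3 : 1 ≤ log 3 := (le_log_iff_exp_le three_pos).2 (by linarith [exp_one_lt_three])
  refine log_div_log_log_le_of_log_le_mul_log (y := r) (by exact_mod_cast hr) ?_ ?_
  · calc (r : ℝ) ≤ r * log 3 := le_mul_of_one_le_right r.cast_nonneg hlog3
      _ = log (3 ^ r) := (log_pow 3 r).symm
      _ ≤ log n := log_le_log (by positivity) (by exact_mod_cast hlow)
  · calc log n ≤ log ((r : ℝ) ^ k) := log_le_log (by exact_mod_cast hn) (by exact_mod_cast hup)
      _ = k * log r := log_pow (r : ℝ) k

end LogLog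

theorem exists_normal_subgroup_rank_ge_log_div_loglog_general {ι : Type*} [Fintype ι]
    [DecidableEq ι] [Nontrivial ι] (hι : Even (Fintype.card ι)) :
    ∃ r₀ : ℕ, ∀ r : ℕ, r₀ ≤ r →
      ∃ L : Subgroup (SpecialLinearGroup ι ℤ), L.Normal ∧ L.index ≠ 0 ∧
        Real.log L.index / Real.log (Real.log L.index) ≤ 3 * Fintype.card ι ^ 2 * r ∧
        ∀ S : Finset (SpecialLinearGroup ι ℤ),
          Subgroup.closure (S : Set (SpecialLinearGroup ι ℤ)) = L →
            (r : ℝ) ≤ S.card ∧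
            Real.log L.index / (3 * Fintype.card ι ^ 2 * Real.log (Real.log L.index)) ≤
              S.card := by
  refine ⟨4, fun r hr => ?_⟩
  obtain ⟨M, hlow, hup, hroots⟩ := exists_modulus_two_pow_le_card_rootsOfUnity hr
  have : NeZero M := ⟨((pow_pos three_pos r).trans_le hlow).ne'⟩
  have hsurj : Function.Surjective (Int.castRingHom (ZMod M)) := ZMod.intCast_surjective
  let L := projectiveCongruenceSubgroup ι (Int.castRingHom (ZMod M))
  have hindex_low : 3 ^ r ≤ L.index := hlow.trans <| by
    simpa only [Nat.card_zmod] using card_le_index_projectiveCongruenceSubgroup (ι := ι) hsurj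
  have hindex_up : L.index ≤ r ^ (3 * Fintype.card ι ^ 2 * r) :=
    calc L.index ≤ Nat.card (ZMod M) ^ Fintype.card ι ^ 2 :=
          index_projectiveCongruenceSubgroup_le ι _
      _ ≤ (r ^ (3 * r)) ^ Fintype.card ι ^ 2 := by
          rw [Nat.card_zmod]
          exact Nat.pow_le_pow_left hup _
      _ = r ^ (3 * Fintype.card ι ^ 2 * r) := by rw [← pow_mul, mul_right_comm]
  have hlog : Real.log L.index / Real.log (Real.log L.index) ≤ 3 * Fintype.card ι ^ 2 * r := by
    exact_mod_cast log_div_log_log_le_of_three_pow_le_of_le_pow (by omega) hindex_low hindex_up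
  refine ⟨L, inferInstance, Subgroup.FiniteIndex.index_ne_zero, hlog, fun S hS => ?_⟩
  have hcard : r ≤ S.card := (Nat.pow_le_pow_iff_right one_lt_two).1
    (hroots.trans (card_rootsOfUnity_two_le_two_pow_card_of_closure_eq hι hsurj hS))
  have hcard' : (r : ℝ) ≤ S.card := by exact_mod_cast hcard
  refine ⟨hcard', le_trans ?_ hcard'⟩
  rw [div_mul_eq_div_div_swap]
  exact div_le_of_le_mul₀ (by positivity) r.cast_nonneg (by rwa [mul_comm])

/-- For all sufficiently large positive integers `r` there exists a normal subgroup
`L` of `G = SL₄(ℤ)` of finite index `n = [G : L]` such that `rank L ≥ r` and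
`log n / log (log n) ≤ 48 r`; consequently every generating set of `L` has at least
`log n / (48 log (log n))` elements, i.e. `rank L ≥ log n / (48 log log n)`. -/
theorem exists_normal_subgroup_rank_ge_log_div_loglog :
    ∃ r₀ : ℕ, ∀ r : ℕ, r₀ ≤ r →
      ∃ L : Subgroup (Matrix.SpecialLinearGroup (Fin 4) ℤ), L.Normal ∧ L.index ≠ 0 ∧
        Real.log (L.index : ℝ) / Real.log (Real.log (L.index : ℝ)) ≤ 48 * r ∧
        ∀ S : Finset (Matrix.SpecialLinearGroup (Fin 4) ℤ),
          Subgroup.closure (S : Set (Matrix.SpecialLinearGroup (Fin 4) ℤ)) = L →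
            (r : ℝ) ≤ S.card ∧
            Real.log (L.index : ℝ) / (48 * Real.log (Real.log (L.index : ℝ))) ≤
              S.card := by
  have hconst : 3 * (Fintype.card (Fin 4) : ℝ) ^ 2 = 48 := by norm_num
  simpa only [hconst] using
    exists_normal_subgroup_rank_ge_log_div_loglog_general (ι := Fin 4) (by decide)
end
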